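/- arXiv:2307.06480 — 5 statements merged into one kernel-verified Lean document; each statement's English description precedes it below -/
import Mathlib

section
/- Let A be a unital C*-algebra and let f : T(A) → ℝ be a weak*-continuous affine function on the set T(A) of tracial states of A. Then: (a) for every ε > 0 there exists a self-adjoint element a ∈ A such that τ(a) = f(τ) for every τ ∈ T(A) and ‖a‖ < sup_{τ ∈ T(A)} |f(τ)| + ε; and (b) if a, b ∈ A are self-adjoint and τ(a) = f(τ) = τ(b) for every τ ∈ T(A), then a − b lies in the norm closure of the ℂ-linear span of {xy − yx : x, y ∈ A}. -/
/-!
The span of commutators is handled by duality, with the Jordan decomposition of hermitian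
functionals as the main tool.

A hermitian functional `φ` on a C*-algebra is a difference `p - q` of positive functionals with
`p 1 + q 1 = ‖φ‖` (`exists_jordan`, by an M. Riesz extension argument), and the decomposition is
unique (`PositiveLinearMap.jordan_unique`, by Cauchy–Schwarz). If `φ` is tracial, conjugation by a
unitary fixes `φ`, hence fixes `p` and `q`, which are therefore tracial (`exists_tracial_jordan`).
So a hermitian tracial functional is a combination of tracial states with total mass `‖φ‖`, and
Hahn–Banach shows that the distance of a self-adjoint `a` to the span of commutators is at most
the supremum of `|τ a|` over tracial states `τ` (`norm_mk_commutatorSpan_le`). When all `τ` vanish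
on `a` this is (b).

For (a), separating the graphs of `f` and `f + ε` in the weak-* dual times `ℂ` shows that the
functions `τ ↦ τ a`, with `a` self-adjoint, are uniformly dense among the continuous affine
functions (`IsAffineOnTraces.exists_approx`). By the distance estimate, each such function has a
self-adjoint representative of norm at most `1 + η` times its supremum norm
(`evalTraces_surjectiveOnWith`). Hence the range of the evaluation map is closed under uniform
limits, with the same norm control up to an arbitrarily small loss; this is
`controlled_closure_of_complete`.
-/

open scoped ComplexOrder

/-- The set of tracial states on a unital C*-algebra `A`, as a subset of the weak-* dual. -/
def tracialStateSet (A : Type*) [CStarAlgebra A] : Set (WeakDual ℂ A) :=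
  {τ | τ 1 = 1 ∧ (∀ x : A, 0 ≤ τ (star x * x)) ∧ ∀ x y : A, τ (x * y) = τ (y * x)}

/-! ### Positive functionals and uniqueness of the Jordan decomposition -/

section Positive

variable {A : Type*} [CStarAlgebra A] [PartialOrder A] [StarOrderedRing A]

/-- Cauchy–Schwarz inequality in the GNS pre-Hilbert space of `p`. -/
lemma PositiveLinearMap.cauchy_schwarz (p : A →ₚ[ℂ] ℂ) (b x : A) :
    ‖p (star b * x)‖ ≤ √(p (star b * b)).re * √(p (star x * x)).re :=
  norm_inner_le_norm (𝕜 := ℂ) (p.toPreGNS b) (p.toPreGNS x)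

omit [StarOrderedRing A] in
lemma PositiveLinearMap.re_mono (p : A →ₚ[ℂ] ℂ) {a b : A} (h : a ≤ b) :
    (p a).re ≤ (p b).re :=
  (Complex.le_def.1 (OrderHomClass.mono p h)).1

lemma PositiveLinearMap.re_one_nonneg (p : A →ₚ[ℂ] ℂ) : 0 ≤ (p 1).re := by
  have := p.re_mono (zero_le_one (α := A))
  simpa using this

lemma PositiveLinearMap.sqrt_star_mul_self_le (p : A →ₚ[ℂ] ℂ) (x : A) :
    √(p (star x * x)).re ≤ √(p 1).re * ‖x‖ := by
  rw [Real.sqrt_le_left (by positivity), mul_pow, Real.sq_sqrt p.re_one_nonneg]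
  have h := p.re_mono (CStarAlgebra.star_mul_le_algebraMap_norm_sq (a := x))
  rw [Algebra.algebraMap_eq_smul_one, ← Complex.coe_smul, map_smul] at h
  simp only [smul_eq_mul, Complex.re_ofReal_mul] at h
  linarith

lemma PositiveLinearMap.norm_apply_le' (p : A →ₚ[ℂ] ℂ) (x : A) :
    ‖p x‖ ≤ (p 1).re * ‖x‖ := by
  have h := p.cauchy_schwarz 1 x
  simp only [star_one, one_mul] at h
  calc _ ≤ _ := h
    _ ≤ √(p 1).re * (√(p 1).re * ‖x‖) := by gcongr; exact p.sqrt_star_mul_self_le x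
    _ = _ := by rw [← mul_assoc, Real.mul_self_sqrt p.re_one_nonneg]

lemma PositiveLinearMap.norm_mul_le (p : A →ₚ[ℂ] ℂ) {b : A} (hb : IsSelfAdjoint b)
    (hbb : b * b ≤ b) {δ C : ℝ} (hδ : 0 ≤ δ) (h : (p b).re ≤ δ ^ 2) (hC : (p 1).re ≤ C) (x : A) :
    ‖p (b * x)‖ ≤ δ * (√C * ‖x‖) := by
  have h1 := p.cauchy_schwarz b x
  rw [hb.star_eq] at h1
  refine h1.trans ?_
  gcongr
  · rw [Real.sqrt_le_left hδ]
    exact (p.re_mono hbb).trans h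
  · exact (p.sqrt_star_mul_self_le x).trans (by gcongr)

/-- If `φ = p - q` is a minimal decomposition and the self-adjoint contraction `a` almost norms
`φ`, then `p` is small on `b = (1 - a) / 2` and `q` is small on `1 - b = (1 + a) / 2`.  By
Cauchy–Schwarz, `p` is close to `x ↦ φ ((1 + a) / 2 * x)`, which does not involve `p` and `q`. -/
lemma PositiveLinearMap.norm_sub_le_of_almost_norming (φ : A →L[ℂ] ℂ) (p q : A →ₚ[ℂ] ℂ)
    (h : ∀ x, p x - q x = φ x) (hn : (p 1).re + (q 1).re = ‖φ‖)
    {a : A} (ha : IsSelfAdjoint a) (ha1 : ‖a‖ ≤ 1) {δ : ℝ} (hδ : 0 ≤ δ)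
    (hφ : ‖φ‖ - δ ^ 2 ≤ (φ a).re) (x : A) :
    ‖p x - φ ((1 / 2 : ℂ) • (1 + a) * x)‖ ≤ 2 * (δ * (√‖φ‖ * ‖x‖)) := by
  have haa : a * a ≤ 1 := by
    have h := CStarAlgebra.star_mul_le_algebraMap_norm_sq (a := a)
    rw [ha.star_eq] at h
    refine h.trans ?_
    rw [← map_one (algebraMap ℝ A)]
    exact algebraMap_mono A (by nlinarith [norm_nonneg a])
  have hle : a ≤ 1 := ha.le_algebraMap_norm_self.trans (by
    rw [← map_one (algebraMap ℝ A)]; exact algebraMap_mono A ha1)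
  have hge : -a ≤ 1 := (neg_le.1 ha.neg_algebraMap_norm_le_self).trans (by
    rw [← map_one (algebraMap ℝ A)]; exact algebraMap_mono A ha1)
  have key : ∀ c : A, c * c ≤ 1 → (1 / 2 : ℂ) • (1 - c) * ((1 / 2 : ℂ) • (1 - c)) ≤
      (1 / 2 : ℂ) • (1 - c) := by
    intro c hc
    rw [← sub_nonneg]
    have : (1 / 2 : ℂ) • (1 - c) - (1 / 2 : ℂ) • (1 - c) * ((1 / 2 : ℂ) • (1 - c)) =
        (1 / 4 : ℂ) • (1 - c * c) := by
      simp only [smul_mul_smul_comm, mul_sub, sub_mul, one_mul, mul_one]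
      module
    rw [this]
    refine smul_nonneg ?_ (sub_nonneg.2 hc)
    norm_num [Complex.le_def]
  have hsa : ∀ c : A, IsSelfAdjoint c → IsSelfAdjoint ((1 / 2 : ℂ) • (1 - c)) := by
    intro c hc
    rw [IsSelfAdjoint, star_smul, star_sub, hc.star_eq, star_one]
    simp
  have e1 : (p ((1 / 2 : ℂ) • (1 - a))).re = ((p 1).re - (p a).re) / 2 := by
    simp [map_smul]; ring
  have e2 : (q ((1 / 2 : ℂ) • (1 - -a))).re = ((q 1).re + (q a).re) / 2 := by
    simp [map_smul]; ring
  have e3 : (φ a).re = (p a).re - (q a).re := by rw [← h, Complex.sub_re]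
  have m1 := p.re_mono hle
  have m2 := q.re_mono hge
  rw [map_neg, Complex.neg_re] at m2
  have b1 := p.norm_mul_le (hsa a ha) (key a haa) hδ (by rw [e1]; linarith)
    (C := ‖φ‖) (by linarith [q.re_one_nonneg]) x
  have b2 := q.norm_mul_le (hsa (-a) ha.neg) (key (-a) (by simpa using haa)) hδ
    (by rw [e2]; linarith) (C := ‖φ‖) (by linarith [p.re_one_nonneg]) x
  have e4 : p x - φ ((1 / 2 : ℂ) • (1 + a) * x) =
      p ((1 / 2 : ℂ) • (1 - a) * x) + q ((1 / 2 : ℂ) • (1 - -a) * x) := by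
    rw [← h]
    have : x = (1 / 2 : ℂ) • (1 - a) * x + (1 / 2 : ℂ) • (1 + a) * x := by
      rw [← add_mul, ← smul_add]
      have : (1 - a) + (1 + a) = (2 : ℂ) • (1 : A) := by module
      rw [this, smul_smul]; simp
    nth_rewrite 1 [this]
    rw [map_add, sub_neg_eq_add]
    ring
  rw [e4]
  refine (norm_add_le _ _).trans ?_
  linarith

omit [PartialOrder A] [StarOrderedRing A] in
/-- The norm of a hermitian functional is approximated on the self-adjoint contractions: rotate a
vector almost norming `φ` and take its real part. -/
lemma exists_isSelfAdjoint_almost_norming (φ : A →L[ℂ] ℂ)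
    (hφ : ∀ x, φ (star x) = star (φ x)) {ε : ℝ} (hε : 0 < ε) :
    ∃ a : A, IsSelfAdjoint a ∧ ‖a‖ ≤ 1 ∧ ‖φ‖ - ε ≤ (φ a).re := by
  obtain ⟨x, hx, hx'⟩ : ∃ x : A, ‖x‖ ≤ 1 ∧ ‖φ‖ - ε ≤ ‖φ x‖ := by
    by_cases h : ‖φ‖ - ε < 0
    · exact ⟨0, by simp, by simpa using h.le⟩
    · obtain ⟨x, hx, h⟩ := φ.exists_lt_apply_of_lt_opNorm (r := ‖φ‖ - ε) (by linarith)
      exact ⟨x, hx.le, h.le⟩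
  obtain ⟨c, hc, hcx⟩ : ∃ c : ℂ, ‖c‖ = 1 ∧ c * φ x = ‖φ x‖ := by
    obtain ⟨c, hc, h⟩ := RCLike.exists_norm_mul_eq_self (φ x)
    by_cases h0 : φ x = 0
    · exact ⟨1, by simp, by simp [h0]⟩
    · refine ⟨c⁻¹, by simp [hc], ?_⟩
      have : c ≠ 0 := by rintro rfl; simp at hc
      rw [inv_mul_eq_iff_eq_mul₀ this]; exact h.symm
  refine ⟨(realPart (c • x) : A), (realPart (c • x)).2, ?_, ?_⟩
  · refine (realPart.norm_le (c • x)).trans ?_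
    rw [norm_smul, hc, one_mul]; exact hx
  · have : φ (realPart (c • x) : A) = ‖φ x‖ := by
      rw [realPart_apply_coe, ← Complex.coe_smul, map_smul, map_add, hφ, map_smul, smul_eq_mul,
        smul_eq_mul, hcx]
      simp
      ring
    rw [this]; simpa using hx'

/-- Uniqueness of the Jordan decomposition: both positive parts are close to the same functional
`x ↦ φ ((1 + a) / 2 * x)` for any `a` almost norming `φ`. -/
lemma PositiveLinearMap.jordan_unique (φ : A →L[ℂ] ℂ)
    (hφ : ∀ x, φ (star x) = star (φ x)) (p q p' q' : A →ₚ[ℂ] ℂ)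
    (h : ∀ x, p x - q x = φ x) (hn : (p 1).re + (q 1).re = ‖φ‖)
    (h' : ∀ x, p' x - q' x = φ x) (hn' : (p' 1).re + (q' 1).re = ‖φ‖) (x : A) :
    p x = p' x := by
  have key : ∀ δ : ℝ, 0 < δ → ‖p x - p' x‖ ≤ δ * (4 * (√‖φ‖ * ‖x‖)) := by
    intro δ hδ
    obtain ⟨a, ha, ha1, hφa⟩ := exists_isSelfAdjoint_almost_norming φ hφ (pow_pos hδ 2)
    have b1 := norm_sub_le_of_almost_norming φ p q h hn ha ha1 hδ.le hφa x
    have b2 := norm_sub_le_of_almost_norming φ p' q' h' hn' ha ha1 hδ.le hφa x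
    have := norm_sub_le_norm_sub_add_norm_sub (p x) (φ ((1 / 2 : ℂ) • (1 + a) * x)) (p' x)
    rw [norm_sub_rev (φ _) (p' x)] at this
    linarith
  set K := 4 * (√‖φ‖ * ‖x‖) with hK
  have hK0 : 0 ≤ K := by positivity
  have : ‖p x - p' x‖ ≤ 0 := by
    refine le_of_forall_pos_le_add fun ε hε => ?_
    refine (key (ε / (K + 1)) (by positivity)).trans ?_
    rw [zero_add, div_mul_eq_mul_div, div_le_iff₀ (by positivity)]
    nlinarith
  exact sub_eq_zero.1 (norm_le_zero_iff.1 this)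

/-! ### Existence of the Jordan decomposition -/

/-- The cone of triples `(x, y, t)` with `x + x* + t ≥ 0` and `y + y* + t ≥ 0`.  Positive functionals
on `A × A × ℝ` for this cone encode pairs of positive functionals on `A` with a bound on the sum of
their norms. -/
def jordanCone (A : Type*) [CStarAlgebra A] [PartialOrder A] [StarOrderedRing A] :
    PointedCone ℝ (A × A × ℝ) where
  carrier := {v | 0 ≤ v.1 + star v.1 + v.2.2 • (1 : A) ∧
    0 ≤ v.2.1 + star v.2.1 + v.2.2 • (1 : A)}
  zero_mem' := by simp
  add_mem' {v w} hv hw := by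
    refine ⟨(add_nonneg hv.1 hw.1).trans_eq ?_, (add_nonneg hv.2 hw.2).trans_eq ?_⟩ <;>
    · simp only [Prod.fst_add, Prod.snd_add, star_add, add_smul]
      abel
  smul_mem' c v hv := by
    have e : ∀ (x : A) (t : ℝ), (c : ℝ) • (x + star x + t • (1 : A)) =
        (c : ℝ) • x + star ((c : ℝ) • x) + ((c : ℝ) * t) • (1 : A) := by
      intro x t
      simp only [star_smul, smul_add, smul_smul, star_trivial]
    exact ⟨(smul_nonneg c.2 hv.1).trans_eq (e _ _), (smul_nonneg c.2 hv.2).trans_eq (e _ _)⟩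

lemma add_star_add_nonneg_of_norm (x : A) : 0 ≤ x + star x + ‖x + star x‖ • (1 : A) := by
  have h := (IsSelfAdjoint.add_star_self x).neg_algebraMap_norm_le_self
  rw [Algebra.algebraMap_eq_smul_one] at h
  have := sub_nonneg.2 h
  rwa [sub_neg_eq_add] at this

/-- A real-linear functional that is nonnegative on `{x | 0 ≤ x + x*}` is the real part of a positive
complex-linear one. -/
lemma exists_positiveLinearMap_of_real (g : A →ₗ[ℝ] ℝ)
    (hg : ∀ x, 0 ≤ x + star x → 0 ≤ g x) :
    ∃ p : A →ₚ[ℂ] ℂ, ∀ x, p x = (g x : ℂ) - Complex.I * (g (Complex.I • x) : ℂ) := by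
  refine ⟨PositiveLinearMap.mk₀ (Module.Dual.extendRCLike (𝕜 := ℂ) g) fun x hx => ?_,
    fun x => rfl⟩
  have hsa : star x = x := (IsSelfAdjoint.of_nonneg hx).star_eq
  have h0 : g (Complex.I • x) = 0 := by
    have h1 := hg (Complex.I • x) (by simp [hsa])
    have h2 := hg (-(Complex.I • x)) (by simp [hsa])
    rw [map_neg] at h2
    linarith
  have h3 : 0 ≤ g x := hg x (by rw [hsa]; exact add_nonneg hx hx)
  change 0 ≤ (g x : ℂ) - Complex.I * (g (Complex.I • x) : ℂ)
  rw [h0]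
  simpa using h3

/-- The hypotheses say `-t ≤ y ≤ t`, so `‖y‖ ≤ t`. -/
lemma neg_norm_mul_le (φ : A →L[ℂ] ℂ) {y : A} (hy : IsSelfAdjoint y) {t : ℝ}
    (h1 : 0 ≤ y + t • (1 : A)) (h2 : 0 ≤ -y + t • (1 : A)) :
    0 ≤ (φ y).re + ‖φ‖ * t := by
  rcases subsingleton_or_nontrivial A with hA | hA
  · have : φ = 0 := Subsingleton.elim _ _
    simp [this]
  have h1' : algebraMap ℝ A (-t) ≤ y := by
    rw [map_neg, Algebra.algebraMap_eq_smul_one, neg_le_iff_add_nonneg]; exact h1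
  have h2' : y ≤ algebraMap ℝ A t := by
    rw [Algebra.algebraMap_eq_smul_one, ← sub_nonneg, sub_eq_neg_add]; exact h2
  rw [algebraMap_le_iff_le_spectrum] at h1'
  rw [le_algebraMap_iff_spectrum_le] at h2'
  have hn : ‖y‖ ≤ t := by
    rcases CStarAlgebra.norm_or_neg_norm_mem_spectrum hy with h | h
    · exact h2' _ h
    · linarith [h1' _ h]
  have h3 := (Complex.abs_re_le_norm (φ y)).trans (φ.le_opNorm y)
  have h4 : ‖φ‖ * ‖y‖ ≤ ‖φ‖ * t := by gcongr
  linarith [neg_abs_le (φ y).re]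

/-- Existence of the Jordan decomposition.  On the subspace of triples `(x, -x, t)` the functional
`2 * Re (φ x) + ‖φ‖ * t` is nonnegative on `jordanCone`; extend it by M. Riesz.  The extension at
`(x, 0, 0)` and `(0, x, 0)` yields `p` and `q`, up to a factor `2`, and its value at `t` gives
the norm identity. -/
lemma exists_jordan (φ : A →L[ℂ] ℂ) (hφ : ∀ x, φ (star x) = star (φ x)) :
    ∃ p q : A →ₚ[ℂ] ℂ, (∀ x, p x - q x = φ x) ∧ (p 1).re + (q 1).re = ‖φ‖ := by
  let D : Submodule ℝ (A × A × ℝ) :=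
    LinearMap.ker (LinearMap.fst ℝ A (A × ℝ) + LinearMap.fst ℝ A ℝ ∘ₗ LinearMap.snd ℝ A (A × ℝ))
  let f₀ : A × A × ℝ →ₗ[ℝ] ℝ :=
    (2 : ℝ) • (Complex.reLm ∘ₗ (φ.toLinearMap.restrictScalars ℝ) ∘ₗ LinearMap.fst ℝ A (A × ℝ)) +
      ‖φ‖ • (LinearMap.snd ℝ A ℝ ∘ₗ LinearMap.snd ℝ A (A × ℝ))
  have hf₀ : ∀ x y t, f₀ (x, y, t) = 2 * (φ x).re + ‖φ‖ * t := fun x y t => rfl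
  have hD : ∀ x y t, (x, y, t) ∈ D ↔ x + y = 0 := fun x y t => Iff.rfl
  obtain ⟨M, hM, hM0⟩ := riesz_extension (jordanCone A) ⟨D, f₀.domRestrict D⟩
    (by
      rintro ⟨⟨x, y, t⟩, hv⟩ ⟨h1, h2⟩
      change 0 ≤ f₀ (x, y, t)
      rw [hf₀]
      obtain rfl : y = -x := by rw [hD] at hv; exact (neg_eq_of_add_eq_zero_right hv).symm
      simp only [star_neg] at h1 h2
      have e : φ (x + star x) = ((2 * (φ x).re : ℝ) : ℂ) := by
        rw [map_add, hφ]
        exact Complex.add_conj _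
      have e' : 2 * (φ x).re = (φ (x + star x)).re := by rw [e, Complex.ofReal_re]
      rw [e']
      refine neg_norm_mul_le φ (IsSelfAdjoint.add_star_self x) ?_ ?_
      · exact h1
      · rw [neg_add]; exact h2)
    (by
      rintro ⟨x, y, t⟩
      refine ⟨⟨(0, 0, max ‖x + star x‖ ‖y + star y‖ - t), by simp [hD]⟩, ?_, ?_⟩
      · simp only [Prod.mk_add_mk, zero_add, sub_add_cancel]
        refine (add_star_add_nonneg_of_norm x).trans ?_
        gcongr
        exact le_max_left _ _
      · simp only [Prod.mk_add_mk, zero_add, sub_add_cancel]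
        refine (add_star_add_nonneg_of_norm y).trans ?_
        gcongr
        exact le_max_right _ _)
  have hM' : ∀ x t, M (x, -x, t) = 2 * (φ x).re + ‖φ‖ * t := fun x t =>
    hM ⟨(x, -x, t), by simp [hD]⟩
  have hz : (0 : A × A × ℝ) = (0, 0, 0) := rfl
  obtain ⟨p, hp⟩ := exists_positiveLinearMap_of_real
    ((1 / 2 : ℝ) • (M ∘ₗ LinearMap.inl ℝ A (A × ℝ)))
    (fun x hx => by
      have := hM0 (x, 0, 0) ⟨by simpa using hx, by simp⟩
      exact mul_nonneg (by norm_num) this)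
  obtain ⟨q, hq⟩ := exists_positiveLinearMap_of_real
    ((1 / 2 : ℝ) • (M ∘ₗ LinearMap.inr ℝ A (A × ℝ) ∘ₗ LinearMap.inl ℝ A ℝ))
    (fun x hx => by
      have := hM0 (0, x, 0) ⟨by simp, by simpa using hx⟩
      exact mul_nonneg (by norm_num) this)
  have hdiff : ∀ x, M (x, 0, 0) - M (0, x, 0) = 2 * (φ x).re := by
    intro x
    rw [← map_sub]
    simpa using hM' x 0
  refine ⟨p, q, fun x => ?_, ?_⟩
  · have h1 := hdiff x
    have h2 := hdiff (Complex.I • x)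
    simp only [map_smul, smul_eq_mul, Complex.mul_re, Complex.I_re, Complex.I_im] at h2
    rw [hp, hq]
    change ((1 / 2 * M (x, 0, 0) : ℝ) : ℂ) - Complex.I * ((1 / 2 * M (Complex.I • x, 0, 0) : ℝ) : ℂ)
      - (((1 / 2 * M (0, x, 0) : ℝ) : ℂ) -
        Complex.I * ((1 / 2 * M (0, Complex.I • x, 0) : ℝ) : ℂ)) = φ x
    apply Complex.ext
    · simp only [Complex.sub_re, Complex.mul_re, Complex.ofReal_re, Complex.ofReal_im,
        Complex.I_re, Complex.I_im]
      linarith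
    · simp only [Complex.sub_im, Complex.mul_im, Complex.ofReal_re, Complex.ofReal_im,
        Complex.I_re, Complex.I_im]
      linarith
  · have z1 : (0 : A) = 1 + star 1 + (-2 : ℝ) • (1 : A) := by rw [star_one]; module
    have z2 : (0 : A) = -1 + star (-1) + (2 : ℝ) • (1 : A) := by rw [star_neg, star_one]; module
    -- Both `(1, 1, -2)` and its negative lie in the cone, which fixes `p 1 + q 1`.
    have h1 := hM0 (1, 1, -2) ⟨z1.le, z1.le⟩
    have h2 := hM0 (-1, -1, 2) ⟨z2.le, z2.le⟩
    have e1 : ((1 : A), (1 : A), (-2 : ℝ)) = (1, 0, 0) + (0, 1, 0) - (0, -0, 2) := by simp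
    have e2 : ((-1 : A), (-1 : A), (2 : ℝ)) = (0, -0, 2) - (1, 0, 0) - (0, 1, 0) := by simp
    rw [e1, map_sub, map_add, hM'] at h1
    rw [e2, map_sub, map_sub, hM'] at h2
    rw [hp, hq]
    change (((1 / 2 * M (1, 0, 0) : ℝ) : ℂ) - Complex.I * ((1 / 2 * M (Complex.I • 1, 0, 0) : ℝ) : ℂ)).re
      + (((1 / 2 * M (0, 1, 0) : ℝ) : ℂ) -
        Complex.I * ((1 / 2 * M (0, Complex.I • 1, 0) : ℝ) : ℂ)).re = ‖φ‖
    simp only [Complex.sub_re, Complex.mul_re, Complex.ofReal_re, Complex.ofReal_im,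
      Complex.I_re, Complex.I_im]
    simp only [map_zero, Complex.zero_re] at h1 h2
    linarith

/-! ### Tracial functionals -/

omit [StarOrderedRing A] in
/-- A functional invariant under all inner automorphisms `Ad u` is tracial, since unitaries
span the algebra. -/
lemma PositiveLinearMap.tracial_of_unitary (p : A →ₚ[ℂ] ℂ)
    (h : ∀ u ∈ unitary A, ∀ x, p (u * x * star u) = p x) (x y : A) :
    p (x * y) = p (y * x) := by
  have hy : y ∈ Submodule.span ℂ (unitary A : Set A) := by
    rw [CStarAlgebra.span_unitary]; trivial
  induction hy using Submodule.span_induction with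
  | mem u hu =>
    have := h u hu (x * u)
    rw [← this, ← mul_assoc, mul_assoc (u * x), Unitary.mul_star_self_of_mem hu, mul_one]
  | zero => simp
  | add y z _ _ hy hz => rw [mul_add, add_mul, map_add, map_add, hy, hz]
  | smul c y _ hy => rw [mul_smul_comm, smul_mul_assoc, map_smul, map_smul, hy]

/-- The Jordan decomposition of a tracial functional is tracial: conjugating it by a unitary
gives another Jordan decomposition, so uniqueness applies. -/
lemma exists_tracial_jordan (φ : A →L[ℂ] ℂ) (hφ : ∀ x, φ (star x) = star (φ x))
    (ht : ∀ x y, φ (x * y) = φ (y * x)) :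
    ∃ p q : A →ₚ[ℂ] ℂ, (∀ x, p x - q x = φ x) ∧ (p 1).re + (q 1).re = ‖φ‖ ∧
      (∀ x y, p (x * y) = p (y * x)) ∧ ∀ x y, q (x * y) = q (y * x) := by
  obtain ⟨p, q, h, hn⟩ := exists_jordan φ hφ
  have conj : ∀ (r : A →ₚ[ℂ] ℂ) (u : A), ∃ r' : A →ₚ[ℂ] ℂ, ∀ x, r' x = r (u * x * star u) := by
    intro r u
    refine ⟨PositiveLinearMap.mk₀ (r.toLinearMap ∘ₗ LinearMap.mulRight ℂ (star u) ∘ₗ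
      LinearMap.mulLeft ℂ u) fun x hx => ?_, fun x => rfl⟩
    exact map_nonneg r (star_right_conjugate_nonneg hx u)
  have hp : ∀ x y, p (x * y) = p (y * x) := by
    refine p.tracial_of_unitary fun u hu x => ?_
    obtain ⟨p', hp'⟩ := conj p u
    obtain ⟨q', hq'⟩ := conj q u
    have hφu : ∀ x, φ (u * x * star u) = φ x := fun x => by
      rw [ht, ← mul_assoc, Unitary.star_mul_self_of_mem hu, one_mul]
    rw [← hp']
    refine (PositiveLinearMap.jordan_unique φ hφ p q p' q' h hn (fun x => ?_) ?_ x).symm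
    · rw [hp', hq', h, hφu]
    · rw [hp', hq', mul_one, Unitary.mul_star_self_of_mem hu, hn]
  refine ⟨p, q, h, hn, hp, fun x y => ?_⟩
  have e : ∀ x, q x = p x - φ x := fun x => by rw [← h]; ring
  rw [e, e, hp, ht]

/-- A tracial state is a positive linear map for the order of the C*-algebra. -/
lemma exists_positive_of_mem {τ : WeakDual ℂ A} (hτ : τ ∈ tracialStateSet A) :
    ∃ p : A →ₚ[ℂ] ℂ, ∀ x, p x = τ x := by
  refine ⟨PositiveLinearMap.mk₀ (WeakDual.toStrongDual τ).toLinearMap fun x hx => ?_, fun x => rfl⟩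
  obtain ⟨y, rfl⟩ := CStarAlgebra.nonneg_iff_eq_star_mul_self.1 hx
  exact hτ.2.1 y

/-- A positive tracial functional is `p 1` times a tracial state, or zero. -/
lemma norm_apply_le_of_tracial (p : A →ₚ[ℂ] ℂ) (hp : ∀ x y, p (x * y) = p (y * x)) {a : A}
    {C : ℝ} (h : ∀ τ ∈ tracialStateSet A, ‖τ a‖ ≤ C) : ‖p a‖ ≤ (p 1).re * C := by
  rcases p.re_one_nonneg.eq_or_lt with h0 | h0
  · have := p.norm_apply_le' a
    rw [← h0, zero_mul] at this ⊢
    exact this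
  have h1 : p 1 = ((p 1).re : ℂ) := by
    have := map_nonneg p (zero_le_one (α := A))
    exact Complex.ext rfl (by simpa using (Complex.le_def.1 this).2.symm)
  have := h (StrongDual.toWeakDual (((p 1).re : ℂ)⁻¹ •
    p.toLinearMap.mkContinuous (p 1).re p.norm_apply_le')) ⟨?_, fun x => ?_, fun x y => ?_⟩
  · change ‖((p 1).re : ℂ)⁻¹ * p a‖ ≤ C at this
    rw [norm_mul, norm_inv, Complex.norm_real, Real.norm_of_nonneg h0.le,
      inv_mul_le_iff₀ h0] at this
    exact this
  · change ((p 1).re : ℂ)⁻¹ * p 1 = 1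
    rw [h1, Complex.ofReal_re]
    exact inv_mul_cancel₀ (by exact_mod_cast h0.ne')
  · change 0 ≤ ((p 1).re : ℂ)⁻¹ * p (star x * x)
    refine mul_nonneg ?_ (map_nonneg p (star_mul_self_nonneg x))
    rw [← Complex.ofReal_inv]
    exact_mod_cast (inv_pos.2 h0).le
  · change ((p 1).re : ℂ)⁻¹ * p (x * y) = ((p 1).re : ℂ)⁻¹ * p (y * x)
    rw [hp]

/-- Tracial states control all hermitian tracial functionals: both Jordan parts are multiples of
tracial states, with total mass `‖φ‖`. -/
lemma tracial_bound (φ : A →L[ℂ] ℂ) (hφ : ∀ x, φ (star x) = star (φ x))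
    (ht : ∀ x y, φ (x * y) = φ (y * x)) {a : A} {C : ℝ}
    (h : ∀ τ ∈ tracialStateSet A, ‖τ a‖ ≤ C) : ‖φ a‖ ≤ ‖φ‖ * C := by
  obtain ⟨p, q, hpq, hn, hp, hq⟩ := exists_tracial_jordan φ hφ ht
  rw [← hpq, ← hn, add_mul]
  exact (norm_sub_le _ _).trans
    (add_le_add (norm_apply_le_of_tracial p hp h) (norm_apply_le_of_tracial q hq h))

end Positive

/-! ### Distance to the span of commutators -/

section Distance

variable {A : Type*} [CStarAlgebra A]

lemma star_apply_of_mem {τ : WeakDual ℂ A} (hτ : τ ∈ tracialStateSet A) (x : A) :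
    τ (star x) = star (τ x) := by
  let _ := CStarAlgebra.spectralOrder A
  have := CStarAlgebra.spectralOrderedRing A
  obtain ⟨p, hp⟩ := exists_positive_of_mem hτ
  rw [← hp, ← hp, map_star]

lemma norm_apply_le_of_mem {τ : WeakDual ℂ A} (hτ : τ ∈ tracialStateSet A) (x : A) :
    ‖τ x‖ ≤ ‖x‖ := by
  let _ := CStarAlgebra.spectralOrder A
  have := CStarAlgebra.spectralOrderedRing A
  obtain ⟨p, hp⟩ := exists_positive_of_mem hτ
  have := p.norm_apply_le' x
  rwa [hp, hp, hτ.1, Complex.one_re, one_mul] at this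

lemma apply_eq_re_of_mem {τ : WeakDual ℂ A} (hτ : τ ∈ tracialStateSet A) {a : A}
    (ha : IsSelfAdjoint a) : τ a = ((τ a).re : ℂ) := by
  have := star_apply_of_mem hτ a
  rw [ha.star_eq] at this
  exact (Complex.conj_eq_iff_re.1 this.symm).symm

lemma re_apply_realPart_of_mem {τ : WeakDual ℂ A} (hτ : τ ∈ tracialStateSet A) (x : A) :
    (τ (realPart x : A)).re = (τ x).re := by
  rw [realPart_apply_coe, ← Complex.coe_smul, map_smul, map_add, star_apply_of_mem hτ]
  simp
  ring

/-- The linear span of the commutators. -/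
noncomputable abbrev commutatorSpan (A : Type*) [CStarAlgebra A] : Submodule ℂ A :=
  Submodule.span ℂ {z : A | ∃ x y : A, z = x * y - y * x}

lemma apply_eq_zero_of_mem_commutatorSpan {τ : WeakDual ℂ A} (hτ : τ ∈ tracialStateSet A)
    {n : A} (hn : n ∈ commutatorSpan A) : τ n = 0 := by
  induction hn using Submodule.span_induction with
  | mem z hz => obtain ⟨x, y, rfl⟩ := hz; rw [map_sub, hτ.2.2 x y, sub_self]
  | zero => exact map_zero _
  | add y z _ _ hy hz => rw [map_add, hy, hz, add_zero]
  | smul c y _ hy => rw [map_smul, hy, smul_zero]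

/-- The distance of a self-adjoint element to the span of commutators is at most the supremum
of its values on tracial states: a norming functional of the quotient seminorm can be made
hermitian, and `tracial_bound` applies to it. -/
lemma norm_mk_commutatorSpan_le {a : A} (ha : IsSelfAdjoint a) {C : ℝ} (hC : 0 ≤ C)
    (h : ∀ τ ∈ tracialStateSet A, ‖τ a‖ ≤ C) :
    ‖(Submodule.Quotient.mk a : A ⧸ commutatorSpan A)‖ ≤ C := by
  let _ := CStarAlgebra.spectralOrder A
  have := CStarAlgebra.spectralOrderedRing A
  obtain ⟨g, hg, hga⟩ := exists_dual_vector'' ℂ (Submodule.Quotient.mk a : A ⧸ commutatorSpan A)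
  let ψ : A →ₗ[ℂ] ℂ := g.toLinearMap ∘ₗ (commutatorSpan A).mkQ
  have hψ : ∀ x, ‖ψ x‖ ≤ ‖x‖ := fun x =>
    (g.le_of_opNorm_le hg _).trans (by
      rw [one_mul]; exact Submodule.Quotient.norm_mk_le _ _)
  have hψt : ∀ x y, ψ (x * y) = ψ (y * x) := fun x y => by
    rw [← sub_eq_zero, ← map_sub]
    have hxy : x * y - y * x ∈ commutatorSpan A := Submodule.subset_span ⟨x, y, rfl⟩
    change g (Submodule.Quotient.mk (x * y - y * x)) = 0
    rw [(Submodule.Quotient.mk_eq_zero _).2 hxy, map_zero]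
  let φ₀ : A →ₗ[ℂ] ℂ :=
    { toFun := fun x => (ψ x + star (ψ (star x))) / 2
      map_add' := fun x y => by simp only [star_add, map_add]; ring
      map_smul' := fun c x => by
        simp only [star_smul, map_smul, smul_eq_mul, star_mul', star_star, RingHom.id_apply]
        ring }
  have hφ₀ : ∀ x, φ₀ x = (ψ x + star (ψ (star x))) / 2 := fun x => rfl
  let φ : A →L[ℂ] ℂ := φ₀.mkContinuous 1 fun x => by
    rw [hφ₀, norm_div, one_mul, div_le_iff₀ (by simp)]
    refine (norm_add_le _ _).trans ?_
    have h1 := hψ x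
    have h2 := hψ (star x)
    rw [norm_star] at h2 ⊢
    simp only [Complex.norm_ofNat]
    linarith
  have hφ : ∀ x, φ x = (ψ x + star (ψ (star x))) / 2 := fun x => rfl
  have hφn : ‖φ‖ ≤ 1 := LinearMap.mkContinuous_norm_le _ zero_le_one _
  have key := tracial_bound φ (fun x => by
      rw [hφ, hφ, star_star, star_div₀, star_add, star_star, add_comm]; simp)
    (fun x y => by rw [hφ, hφ, star_mul, star_mul, hψt, hψt (star y)]) h
  have e : φ a = ‖(Submodule.Quotient.mk a : A ⧸ commutatorSpan A)‖ := by
    have : ψ a = ‖(Submodule.Quotient.mk a : A ⧸ commutatorSpan A)‖ := hga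
    rw [hφ, ha.star_eq, this]
    simp
  rw [e, Complex.norm_real, norm_norm] at key
  exact key.trans (mul_le_of_le_one_left hC hφn)

lemma mem_closure_commutatorSpan {a : A} (ha : IsSelfAdjoint a)
    (h : ∀ τ ∈ tracialStateSet A, τ a = 0) : a ∈ closure (commutatorSpan A : Set A) := by
  have := norm_mk_commutatorSpan_le ha le_rfl (fun τ hτ => by rw [h τ hτ, norm_zero])
  exact (QuotientAddGroup.norm_mk_eq_zero_iff_mem_closure
    (S := (commutatorSpan A).toAddSubgroup)).1 (le_antisymm this (norm_nonneg _))

/-- A self-adjoint element may be replaced by one taking the same values on tracial states and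
whose norm is almost the supremum of these values. -/
lemma exists_norm_lt_of_tracial_le {a : A} (ha : IsSelfAdjoint a) {C δ : ℝ} (hC : 0 ≤ C)
    (hδ : 0 < δ) (h : ∀ τ ∈ tracialStateSet A, ‖τ a‖ ≤ C) :
    ∃ b : A, IsSelfAdjoint b ∧ ‖b‖ < C + δ ∧ ∀ τ ∈ tracialStateSet A, τ b = τ a := by
  obtain ⟨m, hm, hmn⟩ := Submodule.Quotient.norm_mk_lt
    (Submodule.Quotient.mk a : A ⧸ commutatorSpan A) hδ
  refine ⟨realPart m, (realPart m).2, ?_, fun τ hτ => ?_⟩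
  · have h1 := norm_mk_commutatorSpan_le ha hC h
    have h2 := realPart.norm_le m
    exact (h2.trans_lt hmn).trans_le (by gcongr)
  · rw [apply_eq_re_of_mem hτ (realPart m).2, re_apply_realPart_of_mem hτ,
      apply_eq_re_of_mem hτ ha]
    have := apply_eq_zero_of_mem_commutatorSpan hτ ((Submodule.Quotient.eq _).1 hm)
    rw [map_sub, sub_eq_zero] at this
    rw [this]

end Distance

/-! ### Continuous affine functions on the trace simplex -/

section Realization

variable {A : Type*} [CStarAlgebra A]

lemma isCompact_tracialStateSet : IsCompact (tracialStateSet A) := by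
  refine (WeakDual.isCompact_closedBall (𝕜 := ℂ) (E := A) 0 1).of_isClosed_subset ?_ ?_
  · have e : tracialStateSet A = {τ | τ 1 = 1} ∩ ((⋂ x : A, {τ | 0 ≤ τ (star x * x)}) ∩
        ⋂ x : A, ⋂ y : A, {τ | τ (x * y) = τ (y * x)}) := by
      ext τ; simp [tracialStateSet]
    rw [e]
    refine (isClosed_eq (WeakDual.eval_continuous _) continuous_const).inter
      ((isClosed_iInter fun x => ?_).inter (isClosed_iInter fun x => isClosed_iInter fun y => ?_))
    · exact isClosed_le continuous_const (WeakDual.eval_continuous _)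
    · exact isClosed_eq (WeakDual.eval_continuous _) (WeakDual.eval_continuous _)
  · intro τ hτ
    simp only [Set.mem_preimage, mem_closedBall_zero_iff]
    refine ContinuousLinearMap.opNorm_le_bound _ zero_le_one fun x => ?_
    rw [one_mul]
    exact norm_apply_le_of_mem hτ x

lemma convex_comb_mem {τ σ : WeakDual ℂ A} (hτ : τ ∈ tracialStateSet A)
    (hσ : σ ∈ tracialStateSet A) {t : ℝ} (ht : t ∈ Set.Icc (0 : ℝ) 1) :
    (t : ℂ) • τ + ((1 - t : ℝ) : ℂ) • σ ∈ tracialStateSet A := by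
  have e : ∀ x, ((t : ℂ) • τ + ((1 - t : ℝ) : ℂ) • σ) x =
      (t : ℂ) * τ x + ((1 - t : ℝ) : ℂ) * σ x := fun x => rfl
  refine ⟨?_, fun x => ?_, fun x y => ?_⟩
  · rw [e, hτ.1, hσ.1]; push_cast; ring
  · rw [e]
    refine add_nonneg (mul_nonneg ?_ (hτ.2.1 x)) (mul_nonneg ?_ (hσ.2.1 x))
    · exact_mod_cast ht.1
    · exact_mod_cast sub_nonneg.2 ht.2
  · rw [e, e, hτ.2.2, hσ.2.2]

/-- Affine functions on the tracial state space, with convex combinations taken in the dual. -/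
def IsAffineOnTraces (f : tracialStateSet A → ℝ) : Prop :=
  ∀ (τ σ ρ : tracialStateSet A) (t : ℝ), t ∈ Set.Icc (0:ℝ) 1 →
      (ρ : WeakDual ℂ A) =
        (t : ℂ) • (τ : WeakDual ℂ A) + ((1 - t : ℝ) : ℂ) • (σ : WeakDual ℂ A) →
      f ρ = t * f τ + (1 - t) * f σ

/-- The graph of a vertically translated affine function is convex.  Values are taken in `ℂ`, so
that the complex version of the separation theorem applies. -/
lemma IsAffineOnTraces.convex_graph {f : tracialStateSet A → ℝ} (hf : IsAffineOnTraces f)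
    (c : ℝ) :
    Convex ℝ (Set.range fun τ : tracialStateSet A =>
      ((τ : WeakDual ℂ A), ((f τ + c : ℝ) : ℂ))) := by
  rintro _ ⟨τ, rfl⟩ _ ⟨σ, rfl⟩ t s ht hs hts
  obtain rfl : s = 1 - t := by linarith
  have ht' : t ∈ Set.Icc (0 : ℝ) 1 := ⟨ht, by linarith⟩
  refine ⟨⟨_, convex_comb_mem τ.2 σ.2 ht'⟩, ?_⟩
  refine Prod.ext rfl ?_
  dsimp only
  rw [hf τ σ _ t ht' rfl]
  simp
  ring

/-- Values of self-adjoint elements are uniformly dense in the continuous affine functions: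
separate the graph of `f` from the graph of `f + ε`, and use that weak-* continuous functionals
are evaluations. -/
lemma IsAffineOnTraces.exists_approx {f : tracialStateSet A → ℝ} (hf : IsAffineOnTraces f)
    (hc : Continuous f) {ε : ℝ} (hε : 0 < ε) :
    ∃ a : A, IsSelfAdjoint a ∧ ∀ τ : tracialStateSet A, |((τ : WeakDual ℂ A) a).re - f τ| < ε := by
  have : CompactSpace (tracialStateSet A) := isCompact_iff_compactSpace.1 isCompact_tracialStateSet
  have hcomp : ∀ c : ℝ, IsCompact (Set.range fun τ : tracialStateSet A =>
      ((τ : WeakDual ℂ A), ((f τ + c : ℝ) : ℂ))) := fun c => isCompact_range (by fun_prop)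
  have : LocallyConvexSpace ℝ (WeakDual ℂ A) :=
    inferInstanceAs (LocallyConvexSpace ℝ (WeakBilin (topDualPairing ℂ A)))
  have hprod : LocallyConvexSpace ℝ (WeakDual ℂ A × ℂ) := Prod.locallyConvexSpace
  -- The separation theorem takes the real structure restricted from the complex one.
  have : @LocallyConvexSpace ℝ (WeakDual ℂ A × ℂ) _ _ _ (Module.complexToReal _) _ := hprod
  obtain ⟨F, u, v, hu, huv, hv⟩ := RCLike.geometric_hahn_banach_compact_closed (𝕜 := ℂ)
    (hf.convex_graph 0) (hcomp 0) (hf.convex_graph ε) (hcomp ε).isClosed (by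
      rw [Set.disjoint_left]
      rintro _ ⟨τ, rfl⟩ ⟨σ, h⟩
      obtain ⟨h1, h2⟩ := Prod.ext_iff.1 h
      obtain rfl := Subtype.ext h1
      have : f σ + ε = f σ + 0 := Complex.ofReal_injective h2
      linarith)
  obtain ⟨a₀, ha₀⟩ := LinearMap.dualEmbedding_surjective (topDualPairing ℂ A)
    (F.comp (ContinuousLinearMap.inl ℂ (WeakDual ℂ A) ℂ))
  have hF : ∀ (τ : WeakDual ℂ A) (s : ℝ), (F (τ, (s : ℂ))).re = (τ a₀).re + s * (F (0, 1)).re := by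
    intro τ s
    have h1 : F (τ, 0) = τ a₀ := (DFunLike.congr_fun ha₀ τ).symm
    have h2 : (τ, (s : ℂ)) = (τ, 0) + (s : ℂ) • ((0 : WeakDual ℂ A), (1 : ℂ)) := by simp
    rw [h2, map_add, map_smul, h1]
    simp
  set L := (F (0, 1)).re
  have hu' : ∀ τ : tracialStateSet A, ((τ : WeakDual ℂ A) a₀).re + f τ * L < u := fun τ => by
    have := hu _ ⟨τ, rfl⟩
    simp only [RCLike.re_to_complex, hF] at this
    simpa using this
  have hv' : ∀ τ : tracialStateSet A, v < ((τ : WeakDual ℂ A) a₀).re + (f τ + ε) * L := fun τ => by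
    have := hv _ ⟨τ, rfl⟩
    simpa only [RCLike.re_to_complex, hF] using this
  refine ⟨realPart (((v / L : ℝ) : ℂ) • (1 : A) - ((1 / L : ℝ) : ℂ) • a₀), (realPart _).2,
    fun τ => ?_⟩
  have h1 := hu' τ
  have h2 := hv' τ
  have hL : 0 < L := by nlinarith
  rw [re_apply_realPart_of_mem τ.2, map_sub, map_smul, map_smul, τ.2.1]
  simp only [smul_eq_mul, Complex.sub_re, Complex.re_ofReal_mul, Complex.ofReal_re, mul_one]
  have e : v / L - 1 / L * ((τ : WeakDual ℂ A) a₀).re - f τ =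
      (v - ((τ : WeakDual ℂ A) a₀).re - f τ * L) / L := by field_simp
  rw [e, abs_lt, lt_div_iff₀ hL, div_lt_iff₀ hL]
  constructor <;> nlinarith

/-- The map from self-adjoint elements to continuous functions on the tracial state space. -/
noncomputable def evalTraces (A : Type*) [CStarAlgebra A] [CompactSpace (tracialStateSet A)] :
    NormedAddGroupHom (selfAdjoint A) C(tracialStateSet A, ℝ) where
  toFun a := ⟨fun τ => ((τ : WeakDual ℂ A) a).re,
    Complex.continuous_re.comp ((WeakDual.eval_continuous (a : A)).comp continuous_subtype_val)⟩
  map_add' a b := by ext τ; simp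
  bound' := ⟨1, fun a => by
    rw [one_mul, ContinuousMap.norm_le _ (norm_nonneg a)]
    exact fun τ => (Complex.abs_re_le_norm _).trans (norm_apply_le_of_mem τ.2 a)⟩

lemma evalTraces_apply [CompactSpace (tracialStateSet A)] (a : selfAdjoint A)
    (τ : tracialStateSet A) : evalTraces A a τ = ((τ : WeakDual ℂ A) a).re := rfl

/-- On its range, `evalTraces` has self-adjoint preimages of almost the same norm. -/
lemma evalTraces_surjectiveOnWith [CompactSpace (tracialStateSet A)] {η : ℝ} (hη : 0 < η) :
    (evalTraces A).SurjectiveOnWith (evalTraces A).range (1 + η) := by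
  rintro _ ⟨a, rfl⟩
  by_cases h0 : evalTraces A a = 0
  · exact ⟨0, by simp [h0]⟩
  have hpos : 0 < ‖evalTraces A a‖ := norm_pos_iff.2 h0
  obtain ⟨b, hb, hbn, hab⟩ := exists_norm_lt_of_tracial_le a.2 (norm_nonneg (evalTraces A a))
    (mul_pos hη hpos) (fun τ hτ => by
      rw [apply_eq_re_of_mem hτ a.2, Complex.norm_real]
      exact (evalTraces A a).norm_coe_le_norm ⟨τ, hτ⟩)
  refine ⟨⟨b, hb⟩, ?_, ?_⟩
  · ext τ
    exact congrArg Complex.re (hab τ τ.2)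
  · rw [add_mul, one_mul]
    exact hbn.le

end Realization

/-- Cuntz–Pedersen type realization of affine functions on the trace
simplex.  If `f` is a weak-*-continuous affine real-valued function on the tracial state
space of a unital C*-algebra `A`, then (a) for every `ε > 0` there is a self-adjoint `a ∈ A`
inducing `f` with `‖a‖ < sup |f| + ε`, and (b) any two self-adjoint elements inducing `f`
agree modulo the norm closure of the span of commutators. -/
theorem stmt0 {A : Type*} [CStarAlgebra A]
    (f : tracialStateSet A → ℝ)
    (hf_cont : Continuous f)
    (hf_affine : ∀ (τ σ ρ : tracialStateSet A) (t : ℝ), t ∈ Set.Icc (0:ℝ) 1 →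
      (ρ : WeakDual ℂ A) =
        (t : ℂ) • (τ : WeakDual ℂ A) + ((1 - t : ℝ) : ℂ) • (σ : WeakDual ℂ A) →
      f ρ = t * f τ + (1 - t) * f σ) :
    (∀ ε : ℝ, 0 < ε → ∃ a : A, IsSelfAdjoint a ∧
        (∀ τ : tracialStateSet A, (τ : WeakDual ℂ A) a = (f τ : ℂ)) ∧
        ‖a‖ < (⨆ τ : tracialStateSet A, |f τ|) + ε) ∧
    (∀ a b : A, IsSelfAdjoint a → IsSelfAdjoint b →
      (∀ τ : tracialStateSet A, (τ : WeakDual ℂ A) a = (f τ : ℂ)) →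
      (∀ τ : tracialStateSet A, (τ : WeakDual ℂ A) b = (f τ : ℂ)) →
      a - b ∈ closure (↑(Submodule.span ℂ {z : A | ∃ x y : A, z = x * y - y * x}) : Set A)) := by
  refine ⟨fun ε hε => ?_, fun a b ha hb hfa hfb => mem_closure_commutatorSpan (ha.sub hb)
    fun τ hτ => by rw [map_sub, hfa ⟨τ, hτ⟩, hfb ⟨τ, hτ⟩, sub_self]⟩
  have : CompactSpace (tracialStateSet A) := isCompact_iff_compactSpace.1 isCompact_tracialStateSet
  have hf : IsAffineOnTraces f := hf_affine
  let F : C(tracialStateSet A, ℝ) := ⟨f, hf_cont⟩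
  have hFmem : F ∈ (evalTraces A).range.topologicalClosure := by
    rw [← SetLike.mem_coe, AddSubgroup.topologicalClosure_coe, Metric.mem_closure_iff]
    intro δ hδ
    obtain ⟨a, ha, hfa⟩ := hf.exists_approx hf_cont hδ
    refine ⟨evalTraces A ⟨a, ha⟩, ⟨_, rfl⟩, ?_⟩
    rw [ContinuousMap.dist_lt_iff hδ]
    intro τ
    rw [dist_comm, Real.dist_eq]
    exact hfa τ
  have : CompleteSpace (selfAdjoint A) :=
    (isClosed_eq continuous_star continuous_id).completeSpace_coe
  -- `η` is chosen so that `(1 + 2 * η) * ‖F‖ < ‖F‖ + ε`.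
  set η := ε / (2 * (‖F‖ + 1)) with hη
  have hη0 : 0 < η := by positivity
  obtain ⟨a, haF, han⟩ := controlled_closure_of_complete (by positivity) hη0
    (evalTraces_surjectiveOnWith (A := A) hη0) F hFmem
  refine ⟨a, a.2, fun τ => ?_, han.trans_lt ?_⟩
  · rw [apply_eq_re_of_mem τ.2 a.2, ← evalTraces_apply, haF]
    rfl
  · have hsup : ‖F‖ ≤ ⨆ τ : tracialStateSet A, |f τ| := by
      rw [ContinuousMap.norm_le _ (Real.iSup_nonneg fun τ => abs_nonneg _)]
      exact fun τ => le_ciSup (f := fun τ => |f τ|)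
        (isCompact_range hf_cont.abs).bddAbove τ
    have : 2 * η * (‖F‖ + 1) = ε := by rw [hη]; field_simp
    nlinarith [norm_nonneg F]
end

section
/- Kirchberg's ε-test: Let (X_n)_{n∈ℕ} be a sequence of nonempty sets and, for each k, n ∈ ℕ, let f_n^{(k)} : X_n → [0,∞] be a function. For x = (x_n)_{n} ∈ ∏_n X_n define f^{(k)}(x) := limsup_{n→∞} f_n^{(k)}(x_n) ∈ [0,∞]. If for every ε > 0 and every k₀ ∈ ℕ there exists x ∈ ∏_n X_n with f^{(k)}(x) < ε for all k ≤ k₀, then there exists x ∈ ∏_n X_n with f^{(k)}(x) = 0 for all k ∈ ℕ. -/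
/-!
The proof is a diagonal argument. For each `m` choose a sequence `y m` whose first `m + 1` limsups
are below `1 / m`; for each fixed `m`, the finitely many inequalities `f k n (y m n) < 1 / m`,
`k ≤ m`, hold together for all large `n`. At the index `n`, use `y m n` for the largest `m ≤ n` for
which these inequalities hold at `n`. This largest `m` tends to infinity with `n`, so the
values `f k n` along the diagonal sequence are eventually squeezed below `1 / m → 0`.
-/


/-- Kirchberg's ε-test.  Let `(X n)` be a sequence of nonempty sets and
`f k n : X n → [0,∞]` functions; for `x ∈ ∏ n, X n` set `f⁽ᵏ⁾(x) := limsupₙ f k n (x n)`.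
If for every `ε > 0` and every `k₀` there is an `x` with `f⁽ᵏ⁾(x) < ε` for all `k ≤ k₀`, then
there is an `x` with `f⁽ᵏ⁾(x) = 0` for all `k`. -/
theorem stmt4 (X : ℕ → Type*) (hX : ∀ n, Nonempty (X n))
    (f : ℕ → (n : ℕ) → X n → ENNReal)
    (h : ∀ ε : ENNReal, 0 < ε → ∀ k₀ : ℕ, ∃ x : (n : ℕ) → X n,
      ∀ k ≤ k₀, Filter.limsup (fun n => f k n (x n)) Filter.atTop < ε) :
    ∃ x : (n : ℕ) → X n, ∀ k : ℕ, Filter.limsup (fun n => f k n (x n)) Filter.atTop = 0 := by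
  classical
  -- For `m = 0` the bound `(0 : ENNReal)⁻¹` is `⊤`, which is still an admissible `ε`.
  choose y hy using fun m : ℕ =>
    h (m : ENNReal)⁻¹ (ENNReal.inv_pos.2 (ENNReal.natCast_ne_top m)) m
  let P : ℕ → ℕ → Prop := fun n m => ∀ k ≤ m, f k n (y m n) < (m : ENNReal)⁻¹
  have hP : ∀ m, ∀ᶠ n in Filter.atTop, P n m := fun m =>
    (Filter.eventually_all_finite (Set.finite_Iic m)).2 fun k hk =>
      Filter.eventually_lt_of_limsup_lt (hy m k hk)
  let g : ℕ → ℕ := fun n => Nat.findGreatest (P n) n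
  have hg : Filter.Tendsto g Filter.atTop Filter.atTop := by
    refine Filter.tendsto_atTop.2 fun m => ?_
    filter_upwards [hP m, Filter.eventually_ge_atTop m] with n hn hmn
    exact Nat.le_findGreatest hmn hn
  refine ⟨fun n => y (g n) n, fun k => Filter.Tendsto.limsup_eq ?_⟩
  refine tendsto_of_tendsto_of_tendsto_of_le_of_le' tendsto_const_nhds
    (ENNReal.tendsto_inv_nat_nhds_zero.comp hg) (Filter.Eventually.of_forall fun _ => zero_le) ?_
  filter_upwards [hg.eventually_ge_atTop (k + 1)] with n hn
  -- `findGreatest` returns the default value `0` when no index works; here `g n ≥ k + 1 > 0`.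
  have hPg : P n (g n) := Nat.findGreatest_of_ne_zero rfl (by lia)
  exact (hPg k (by lia)).le
end

section
/- Let A be a separable unital C*-algebra, let q : E → D be a surjective unital *-homomorphism between unital C*-algebras with kernel I, and let φ, ψ : A → E be unital *-homomorphisms with q ∘ φ = q ∘ ψ and with q ∘ φ injective. Suppose there is a norm-continuous path (v_t)_{t ≥ 0} of unitaries in E such that, for every a ∈ A, v_t φ(a) v_t* − ψ(a) ∈ I for all t ≥ 0 and ‖v_t φ(a) v_t* − ψ(a)‖ → 0 as t → ∞, and such that q(v₀) — which automatically lies in the relative commutant D ∩ q(φ(A))′ — lies in the path component of the identity in the unitary group of D ∩ q(φ(A))′. Then there is a norm-continuous path (u_t)_{t ≥ 0} of unitaries in E such that every u_t is of the form λ·1_E + x with λ ∈ ℂ and x ∈ I, and for every a ∈ A one has u_t φ(a) u_t* − ψ(a) ∈ I for all t ≥ 0 and ‖u_t φ(a) u_t* − ψ(a)‖ → 0 as t → ∞. -/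
/-!
The required path is `u t = v t * star (w t)`, where `w` is a norm-continuous path of unitaries of
`E` with `q (w t) = q (v t)` that asymptotically commutes with `φ(A)`: then `q (u t) = 1`, so
`u t - 1 ∈ I`, and conjugation by `u t` carries `φ` to `ψ` asymptotically because conjugation
by `v t` does. Everything is in the construction of `w`.

*Damping.* If `H ∈ E` is self-adjoint and `q H` commutes with `q (φ(A))`, then all commutators
`[H, φ a]` lie in `I`. For `e` far out in an approximate unit of `I` that is quasicentral in `E`,
the element `(1 - e) H (1 - e)` has the same image as `H` in `D` and almost commutes with any
prescribed finite subset of `φ(A)`; so does the unitary `exp (i (1 - e) H (1 - e))`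
(`DampedPath.exp`), uniformly for `H` in a compact path, and so do finite products of such
unitaries (`DampedPath.mul`).

*Quasicentral approximate units.* The convex sets `qcNhd q F δ` of `e ∈ I`, `0 ≤ e ≤ 1`, which are
`δ`-units on `F ∩ I` and `δ`-commute with `F` are nonempty (`qcNhd_nonempty`). By Hahn–Banach it
suffices that `f (e b - b e) → 0` along an approximate unit of `I` for each `f` in the dual of `E`.
For this, `f` restricted to `I` is nearly of the form `x ↦ f (x e')` with `e' ∈ I`
(`exists_factor`), and `e b e' - b e e' → b e' - b e' = 0` in norm.

*Writing `q (v t)` by exponentials.* Since `q (v 0)` is in the identity component of the unitary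
group of `D ∩ q(φ(A))′`, it is a finite product of exponentials of self-adjoint elements of this
relative commutant, which lift to self-adjoint elements of `E` (`exists_initial`). Subdivide
`[0, ∞)` by `0 = τ 0 < τ 1 < ⋯ → ∞` with `‖v s - v (τ k)‖ < 2` for `s ∈ [τ k, τ (k + 1)]`. On that
interval `v s * star (v (τ k))` is the exponential of its argument, a continuous path of
self-adjoint elements whose images again lie in the relative commutant (`exists_damped_steps`).
Damping every factor gives unitaries `W k e t` with `q (W k e t) = q (v t)` for `t ≤ τ k`.

*Diagonal choice.* The conditions that `e` must satisfy at time `t` (almost commuting with the first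
`⌈t⌉` members of a dense sequence up to `1 / ⌈t⌉`, say) define convex sets, locally containing a
common point; a partition of unity yields a continuous `t ↦ e t`, and `w t = W k (e t) t` for `k`
large (`exists_diagonal`).
-/

open Filter Topology

section Quasi

variable {E D : Type*} [CStarAlgebra E] [CStarAlgebra D]

/-- The kernel of `q` as a closed non-unital star subalgebra. -/
noncomputable def kerAlg (q : E →⋆ₐ[ℂ] D) : NonUnitalStarSubalgebra ℂ E where
  carrier := {x | q x = 0}
  add_mem' := by intro a b ha hb; simp_all
  zero_mem' := by simp
  mul_mem' := by intro a b ha hb; simp_all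
  smul_mem' := by intro c x hx; simp_all
  star_mem' := by intro a ha; simp_all [map_star]

lemma mem_kerAlg {q : E →⋆ₐ[ℂ] D} {x : E} : x ∈ kerAlg q ↔ q x = 0 := Iff.rfl

open scoped CStarAlgebra in
lemma starAlgHom_continuous (q : E →⋆ₐ[ℂ] D) : Continuous q := by
  exact map_continuous q

lemma isClosed_kerAlg (q : E →⋆ₐ[ℂ] D) : IsClosed (kerAlg q : Set E) :=
  isClosed_singleton.preimage (starAlgHom_continuous q)

variable [PartialOrder E] [StarOrderedRing E]

/-! ### Quasicentral approximate units -/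

lemma exists_approx_unit (q : E →⋆ₐ[ℂ] D) :
    ∃ G : Filter E, G.NeBot ∧ (∀ᶠ e in G, q e = 0 ∧ 0 ≤ e ∧ e ≤ 1) ∧
      ∀ c, q c = 0 → Tendsto (fun e => e * c) G (𝓝 c) ∧ Tendsto (fun e => c * e) G (𝓝 c) := by
  have := isClosed_kerAlg q
  let : NonUnitalCStarAlgebra (kerAlg q) :=
    NonUnitalStarSubalgebra.nonUnitalCStarAlgebra (kerAlg q)
  let := CStarAlgebra.spectralOrder (kerAlg q)
  have := CStarAlgebra.spectralOrderedRing (kerAlg q)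
  have h := CStarAlgebra.increasingApproximateUnit (A := kerAlg q)
  have := h.neBot
  refine ⟨(CStarAlgebra.approximateUnit (A := kerAlg q)).map (Subtype.val), inferInstance, ?_, ?_⟩
  · rw [eventually_map]
    filter_upwards [h.eventually_nonneg, h.eventually_norm] with e he0 he1
    have h0 : (0 : E) ≤ e := by
      obtain ⟨s, hs⟩ := CStarAlgebra.nonneg_iff_eq_star_mul_self.1 he0
      rw [hs]
      exact star_mul_self_nonneg (s : E)
    exact ⟨e.2, h0, (CStarAlgebra.norm_le_one_iff_of_nonneg _ h0).1 he1⟩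
  · intro c hc
    rw [tendsto_map'_iff, tendsto_map'_iff]
    exact ⟨(continuous_subtype_val.tendsto _).comp (h.tendsto_mul_right ⟨c, hc⟩),
      (continuous_subtype_val.tendsto _).comp (h.tendsto_mul_left ⟨c, hc⟩)⟩

/-- The `ℓ²` estimate `‖z e + w (1 - e)‖² ≤ ‖z‖² + ‖w‖²`. It forces a functional that almost
attains its norm on `z e` to be small on elements of the form `w (1 - e)`. -/
lemma norm_sq_add_le {e : E} (h0 : 0 ≤ e) (h1 : e ≤ 1) (z w : E) :
    ‖z * e + w * (1 - e)‖ ^ 2 ≤ ‖z‖ ^ 2 + ‖w‖ ^ 2 := by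
  have hse : star e = e := (IsSelfAdjoint.of_nonneg h0).star_eq
  have h1' : 0 ≤ 1 - e := sub_nonneg.2 h1
  have hpos : 0 ≤ e - e * e := by
    have a := star_left_conjugate_nonneg h1' e
    have b := star_left_conjugate_nonneg h0 (1 - e)
    have := add_nonneg a b
    rw [star_sub, star_one, hse] at this
    convert this using 1
    noncomm_ring
  -- `e² + (1 - e)² = 1 - 2 (e - e²) ≤ 1`
  have key : ∀ x : E, x * (1 - 2 • (e - e * e)) * star x ≤ x * star x := by
    intro x
    have := star_right_conjugate_nonneg (nsmul_nonneg hpos 2) x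
    rw [← sub_nonneg]
    convert this using 1
    noncomm_ring
  set T := z * e + w * (1 - e) with hT
  -- the cross terms of `T T*` and `T' T'*` cancel
  set T' := z * (1 - e) - w * e with hT'
  have hid : T * star T + T' * star T' =
      z * (1 - 2 • (e - e * e)) * star z + w * (1 - 2 • (e - e * e)) * star w := by
    simp only [hT, hT', star_add, star_sub, star_mul, star_one, hse]
    noncomm_ring
  have hle : T * star T ≤ z * star z + w * star w := by
    calc T * star T ≤ T * star T + T' * star T' :=
          le_add_of_nonneg_right (mul_star_self_nonneg T')
      _ ≤ _ := by rw [hid]; exact add_le_add (key z) (key w)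
  calc ‖T‖ ^ 2 = ‖T * star T‖ := by rw [CStarRing.norm_self_mul_star, sq]
    _ ≤ ‖z * star z + w * star w‖ :=
        CStarAlgebra.norm_le_norm_of_nonneg_of_le (mul_star_self_nonneg T) hle
    _ ≤ ‖z * star z‖ + ‖w * star w‖ := norm_add_le _ _
    _ = _ := by simp only [CStarRing.norm_self_mul_star, sq]

/-- A functional on the kernel of `q` is approximated in norm by functionals `x ↦ f (x e)` with `e`
in the kernel, an approximate version of Cohen factorization in the dual. If `z` almost norms `f`
and `f (z e)` is still almost `‖f‖`, then `norm_sq_add_le` leaves no room for `f (x (1 - e))`. -/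
lemma exists_factor (q : E →⋆ₐ[ℂ] D) (f : E →L[ℂ] ℂ) {ε : ℝ} (hε : 0 < ε) :
    ∃ e, q e = 0 ∧ ∀ x, q x = 0 → ‖x‖ ≤ 1 → ‖f (x - x * e)‖ ≤ ε := by
  obtain ⟨G, hG, hGe, hGc⟩ := exists_approx_unit q
  let K : Submodule ℂ E := LinearMap.ker (q.toAlgHom.toLinearMap)
  have hK : ∀ x, x ∈ K ↔ q x = 0 := fun x => Iff.rfl
  let g : K →L[ℂ] ℂ := f.comp K.subtypeL
  set n := ‖g‖ with hn
  have hn0 : 0 ≤ n := norm_nonneg g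
  have hgn : ∀ x, q x = 0 → ‖f x‖ ≤ n * ‖x‖ := fun x hx => g.le_opNorm ⟨x, hx⟩
  -- the final estimate is `n² - (n - η)² ≤ 2 η n ≤ ε²`
  set η := ε ^ 2 / (4 * (n + 1)) with hη
  have hη0 : 0 < η := by positivity
  obtain ⟨z, hqz, hz1, hz⟩ : ∃ z, q z = 0 ∧ ‖z‖ ≤ 1 ∧ n - η < ‖f z‖ := by
    rcases lt_or_ge (n - η) 0 with h | h
    · exact ⟨0, by simp, by simp, by simpa using h⟩
    · obtain ⟨x, hx1, hx2⟩ := ContinuousLinearMap.exists_lt_apply_of_lt_opNorm g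
        (show n - η < ‖g‖ by linarith)
      exact ⟨x, x.2, hx1.le, hx2⟩
  have hlim : Tendsto (fun e => ‖f (z * e)‖) G (𝓝 ‖f z‖) :=
    ((f.continuous.tendsto _).comp (hGc z hqz).2).norm
  obtain ⟨e, ⟨hqe, he0, he1⟩, hze⟩ := (hGe.and (hlim.eventually (lt_mem_nhds hz))).exists
  refine ⟨e, hqe, fun x hqx hx1 => ?_⟩
  have hx' : x - x * e = x * (1 - e) := by noncomm_ring
  rw [hx']
  set α := f (z * e) with hα
  set β := f (x * (1 - e)) with hβ
  set S := ‖α‖ ^ 2 + ‖β‖ ^ 2 with hS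
  -- with these coefficients the functional takes the value `|α|² + |β|²`
  set c : ℂ := (starRingEnd ℂ) α
  set d : ℂ := (starRingEnd ℂ) β
  have hfT : f ((c • z) * e + (d • x) * (1 - e)) = (S : ℂ) := by
    rw [map_add, smul_mul_assoc, smul_mul_assoc, map_smul, map_smul]
    simp only [smul_eq_mul, ← hα, ← hβ, c, d, Complex.conj_mul', hS]
    push_cast; rfl
  have hqT : q ((c • z) * e + (d • x) * (1 - e)) = 0 := by simp [hqz, hqx]
  have hT := norm_sq_add_le he0 he1 (c • z) (d • x)
  have hT2 : ‖(c • z) * e + (d • x) * (1 - e)‖ ^ 2 ≤ S := by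
    refine hT.trans ?_
    rw [norm_smul, norm_smul, RCLike.norm_conj, RCLike.norm_conj]
    have h1 : ‖α‖ * ‖z‖ ≤ ‖α‖ := mul_le_of_le_one_right (norm_nonneg _) hz1
    have h2 : ‖β‖ * ‖x‖ ≤ ‖β‖ := mul_le_of_le_one_right (norm_nonneg _) hx1
    rw [hS]
    gcongr
  have hb := hgn _ hqT
  have hS0 : 0 ≤ S := by positivity
  rw [hfT, Complex.norm_real, Real.norm_of_nonneg hS0] at hb
  have hS2 : S ≤ n ^ 2 := by
    rcases hS0.eq_or_lt with h | h
    · rw [← h]; positivity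
    · have : S * S ≤ n ^ 2 * S := by
        calc S * S ≤ (n * ‖(c • z) * e + (d • x) * (1 - e)‖) * (n * ‖(c • z) * e + (d • x) * (1 - e)‖) := by
              gcongr
          _ = n ^ 2 * ‖(c • z) * e + (d • x) * (1 - e)‖ ^ 2 := by ring
          _ ≤ _ := by gcongr
      exact le_of_mul_le_mul_right this h
  have hαn : ‖α‖ ≤ n := by
    have : ‖α‖ ^ 2 ≤ n ^ 2 := by nlinarith [sq_nonneg ‖β‖]
    exact (sq_le_sq₀ (norm_nonneg _) hn0).1 this
  have hβ2 : ‖β‖ ^ 2 ≤ ε ^ 2 := by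
    have h4 : η * (4 * (n + 1)) = ε ^ 2 := by rw [hη]; field_simp
    nlinarith [norm_nonneg α]
  exact (sq_le_sq₀ (norm_nonneg _) hε.le).1 hβ2

/-- An approximate unit of the kernel of `q` is automatically quasicentral for the weak topology of
`E`. -/
lemma tendsto_functional_commutator (q : E →⋆ₐ[ℂ] D) {G : Filter E}
    (hGe : ∀ᶠ e in G, q e = 0 ∧ 0 ≤ e ∧ e ≤ 1)
    (hGc : ∀ c, q c = 0 → Tendsto (fun e => e * c) G (𝓝 c)) (f : E →L[ℂ] ℂ) (b : E) :
    Tendsto (fun e => f (e * b - b * e)) G (𝓝 0) := by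
  rw [Metric.tendsto_nhds]
  intro ε hε
  set ρ := 2 * (‖b‖ + 1) with hρ
  have hρ0 : 0 < ρ := by positivity
  obtain ⟨e', hqe', he'⟩ := exists_factor q f (show 0 < ε / 2 / ρ by positivity)
  have hlim : Tendsto (fun e => f (e * (b * e') - b * (e * e'))) G (𝓝 0) := by
    have : Tendsto (fun e => f (e * (b * e') - b * (e * e'))) G (𝓝 (f (b * e' - b * e'))) :=
      (f.continuous.tendsto _).comp ((hGc (b * e') (by simp [hqe'])).sub
        ((hGc e' hqe').const_mul b))
    simpa using this
  filter_upwards [hGe, (Metric.tendsto_nhds.1 hlim) (ε / 2) (by positivity)]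
    with e ⟨hqe, he0, he1⟩ h2
  rw [dist_zero_right] at h2 ⊢
  have hn : ‖e‖ ≤ 1 := (CStarAlgebra.norm_le_one_iff_of_nonneg _ he0).2 he1
  set x := e * b - b * e with hx
  have hxn : ‖x‖ ≤ ρ := by
    calc ‖x‖ ≤ ‖e * b‖ + ‖b * e‖ := norm_sub_le _ _
      _ ≤ ‖e‖ * ‖b‖ + ‖b‖ * ‖e‖ := add_le_add (norm_mul_le _ _) (norm_mul_le _ _)
      _ ≤ 1 * ‖b‖ + ‖b‖ * 1 := by gcongr
      _ ≤ ρ := by rw [hρ]; linarith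
  have h1 : ‖f (x - x * e')‖ ≤ ε / 2 := by
    have := he' ((ρ⁻¹ : ℂ) • x) (by simp [hx, hqe]) (by
      rw [norm_smul, norm_inv, Complex.norm_real, Real.norm_of_nonneg hρ0.le]
      rw [inv_mul_le_iff₀ hρ0]; linarith)
    rw [smul_mul_assoc, ← smul_sub, map_smul, norm_smul, norm_inv, Complex.norm_real,
      Real.norm_of_nonneg hρ0.le, inv_mul_le_iff₀ hρ0] at this
    calc _ ≤ _ := this
      _ = ε / 2 := by field_simp
  have h3 : x * e' = e * (b * e') - b * (e * e') := by rw [hx]; noncomm_ring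
  calc ‖f x‖ = ‖f (x - x * e') + f (x * e')‖ := by rw [← map_add]; simp
    _ ≤ ‖f (x - x * e')‖ + ‖f (x * e')‖ := norm_add_le _ _
    _ < ε / 2 + ε / 2 := by rw [h3]; exact add_lt_add_of_le_of_lt (h3 ▸ h1) h2
    _ = ε := by ring

/-- The basic sets of a quasicentral approximate unit of the kernel `I` of `q`: positive contractions
`e ∈ I` that act on the left as a unit on `F ∩ I`, and commute with `F`, up to `δ`. -/
def qcNhd (q : E →⋆ₐ[ℂ] D) (F : Finset E) (δ : ℝ) : Set E :=
  {e | q e = 0 ∧ 0 ≤ e ∧ e ≤ 1 ∧ (∀ c ∈ F, q c = 0 → ‖c - e * c‖ < δ) ∧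
    ∀ b ∈ F, ‖e * b - b * e‖ < δ}

omit [PartialOrder E] [StarOrderedRing E] in
lemma convex_aux (L : E →ₗ[ℝ] E) (c : E) (δ : ℝ) : Convex ℝ {e : E | ‖c - L e‖ < δ} := by
  have : {e : E | ‖c - L e‖ < δ} = L ⁻¹' (Metric.ball c δ) := by
    ext e; simp [dist_eq_norm, norm_sub_rev]
  rw [this]
  exact (convex_ball c δ).linear_preimage L

/-- Convexity of the set defined like `qcNhd q F δ`, but without the condition on commutators. -/
lemma convex_qc0 (q : E →⋆ₐ[ℂ] D) (F : Finset E) (δ : ℝ) :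
    Convex ℝ {e | q e = 0 ∧ 0 ≤ e ∧ e ≤ 1 ∧ (∀ c ∈ F, q c = 0 → ‖c - e * c‖ < δ)} := by
  have h1 : Convex ℝ {e | q e = 0} := by
    intro x hx y hy a b _ _ _
    have hs : ∀ (r : ℝ) (x : E), q (r • x) = r • q x := fun r x => by
      rw [← Complex.coe_smul, map_smul, Complex.coe_smul]
    simp_all
  have h2 : Convex ℝ {e : E | ∀ c ∈ F, q c = 0 → ‖c - e * c‖ < δ} := by
    simp only [Set.ofPred_forall]
    exact convex_iInter fun c => convex_iInter fun _ => convex_iInter fun _ =>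
      convex_aux (LinearMap.mulRight ℝ c) c δ
  exact h1.inter ((convex_Ici 0).inter ((convex_Iic 1).inter h2))

lemma convex_qcNhd (q : E →⋆ₐ[ℂ] D) (F : Finset E) (δ : ℝ) : Convex ℝ (qcNhd q F δ) := by
  have h2 : Convex ℝ {e : E | ∀ b ∈ F, ‖e * b - b * e‖ < δ} := by
    simp only [Set.ofPred_forall]
    refine convex_iInter fun c => convex_iInter fun _ => ?_
    have := convex_aux (LinearMap.mulLeft ℝ c - LinearMap.mulRight ℝ c) 0 δ
    simpa using this
  have := (convex_qc0 q F δ).inter h2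
  convert this using 1
  ext e
  simp [qcNhd, and_assoc]

/-- Quasicentral approximate units exist. The tuples of commutators `(e b - b e)_{b ∈ F}`, for `e`
in the convex set of approximate units on `F`, have `0` in their weak closure by
`tendsto_functional_commutator`, hence in their norm closure by Hahn–Banach. -/
lemma qcNhd_nonempty (q : E →⋆ₐ[ℂ] D) (F : Finset E) {δ : ℝ} (hδ : 0 < δ) :
    (qcNhd q F δ).Nonempty := by
  classical
  obtain ⟨G, hG, hGe, hGc⟩ := exists_approx_unit q
  set C := {e | q e = 0 ∧ 0 ≤ e ∧ e ≤ 1 ∧ (∀ c ∈ F, q c = 0 → ‖c - e * c‖ < δ)} with hC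
  have hCG : ∀ᶠ e in G, e ∈ C := by
    have h2 : ∀ᶠ e in G, ∀ c ∈ F, q c = 0 → ‖c - e * c‖ < δ := by
      rw [Filter.eventually_all_finset]
      intro c _
      by_cases hc : q c = 0
      · filter_upwards [Metric.tendsto_nhds.1 (hGc c hc).1 δ hδ] with e he _
        rwa [dist_comm, dist_eq_norm] at he
      · simp [hc]
    filter_upwards [hGe, h2] with e h1 h2
    exact ⟨h1.1, h1.2.1, h1.2.2, h2⟩
  let L : E →ₗ[ℝ] (F → E) := LinearMap.pi fun b => LinearMap.mulRight ℝ (b : E) -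
    LinearMap.mulLeft ℝ (b : E)
  have hL : ∀ e (b : F), L e b = e * b - b * e := fun e b => rfl
  have h0 : (0 : F → E) ∈ closure (L '' C) := by
    by_contra hcon
    obtain ⟨f, u, hfu, hu⟩ := RCLike.geometric_hahn_banach_point_closed (𝕜 := ℂ)
      ((convex_qc0 q F δ).linear_image L).closure isClosed_closure hcon
    have hlim : Tendsto (fun e => RCLike.re (f (L e))) G (𝓝 0) := by
      have h1 : ∀ e, f (L e) =
          ∑ b : F, (f.comp (ContinuousLinearMap.single ℂ (fun _ : F => E) b)) (e * b - b * e) := by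
        intro e
        conv_lhs => rw [← Finset.univ_sum_single (L e)]
        rw [map_sum]
        rfl
      have h2 : Tendsto (fun e => f (L e)) G (𝓝 (∑ b : F, 0)) := by
        simp only [h1]
        exact tendsto_finsetSum _ fun b _ =>
          tendsto_functional_commutator q hGe (fun c hc => (hGc c hc).1) _ _
      have h3 := (RCLike.continuous_re.tendsto _).comp h2
      rw [Finset.sum_const_zero, map_zero] at h3
      exact h3
    have hlt : ∀ᶠ e in G, u < RCLike.re (f (L e)) := by
      filter_upwards [hCG] with e he
      exact hu _ (subset_closure ⟨e, he, rfl⟩)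
    have := ge_of_tendsto hlim (hlt.mono fun e he => he.le)
    simp at hfu
    linarith
  obtain ⟨_, ⟨e, he, rfl⟩, hd⟩ := Metric.mem_closure_iff.1 h0 δ hδ
  refine ⟨e, he.1, he.2.1, he.2.2.1, he.2.2.2, fun b hb => ?_⟩
  rw [dist_zero_left] at hd
  exact (norm_le_pi_norm (L e) ⟨b, hb⟩).trans_lt hd

/-- The filter generated by the sets `qcNhd q F δ`, for finite `F` and `δ > 0`; it plays the role of
a quasicentral approximate unit of the kernel of `q`. -/
def qcFilter (q : E →⋆ₐ[ℂ] D) : Filter E :=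
  ⨅ p ∈ {p : Finset E × ℝ | 0 < p.2}, 𝓟 (qcNhd q p.1 p.2)

omit [StarOrderedRing E] in
lemma qcNhd_mono (q : E →⋆ₐ[ℂ] D) {F F' : Finset E} {δ δ' : ℝ} (hF : F ⊆ F') (hδ : δ' ≤ δ) :
    qcNhd q F' δ' ⊆ qcNhd q F δ := fun _ he =>
  ⟨he.1, he.2.1, he.2.2.1, fun c hc hqc => (he.2.2.2.1 c (hF hc) hqc).trans_le hδ,
    fun b hb => (he.2.2.2.2 b (hF hb)).trans_le hδ⟩

omit [StarOrderedRing E] in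
lemma qcFilter_basis (q : E →⋆ₐ[ℂ] D) :
    (qcFilter q).HasBasis (fun p : Finset E × ℝ => 0 < p.2) (fun p => qcNhd q p.1 p.2) := by
  classical
  refine hasBasis_biInf_principal (S := {p : Finset E × ℝ | 0 < p.2}) ?_ ⟨(∅, 1), one_pos (α := ℝ)⟩
  intro p hp p' hp'
  exact ⟨(p.1 ∪ p'.1, min p.2 p'.2), lt_min (a := (0 : ℝ)) hp hp',
    qcNhd_mono q Finset.subset_union_left (min_le_left _ _),
    qcNhd_mono q Finset.subset_union_right (min_le_right _ _)⟩

instance qcFilter_neBot (q : E →⋆ₐ[ℂ] D) : (qcFilter q).NeBot :=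
  (qcFilter_basis q).neBot_iff.2 fun {p} hp => qcNhd_nonempty q p.1 hp

omit [StarOrderedRing E] in
lemma eventually_qc_contraction (q : E →⋆ₐ[ℂ] D) : ∀ᶠ e in qcFilter q, q e = 0 ∧ 0 ≤ e ∧ e ≤ 1 :=
  (qcFilter_basis q).eventually_iff.2 ⟨(∅, 1), one_pos, fun _ he => ⟨he.1, he.2.1, he.2.2.1⟩⟩

omit [StarOrderedRing E] in
lemma eventually_qc_comm (q : E →⋆ₐ[ℂ] D) (b : E) {ε : ℝ} (hε : 0 < ε) :
    ∀ᶠ e in qcFilter q, ‖e * b - b * e‖ < ε :=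
  (qcFilter_basis q).eventually_iff.2 ⟨({b}, ε), hε, fun _ he => he.2.2.2.2 b (by simp)⟩

omit [StarOrderedRing E] in
lemma eventually_qc_unit (q : E →⋆ₐ[ℂ] D) {c : E} (hc : q c = 0) {ε : ℝ} (hε : 0 < ε) :
    ∀ᶠ e in qcFilter q, ‖c - e * c‖ < ε :=
  (qcFilter_basis q).eventually_iff.2 ⟨({c}, ε), hε, fun _ he => he.2.2.2.1 c (by simp) hc⟩

lemma norm_one_sub_le {e : E} (h0 : 0 ≤ e) (h1 : e ≤ 1) : ‖1 - e‖ ≤ 1 :=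
  (CStarAlgebra.norm_le_one_iff_of_nonneg _ (sub_nonneg.2 h1)).2 (sub_le_self _ h0)

/-- Along `qcFilter q`, `e` acts as a unit uniformly on compact subsets of the kernel. -/
lemma eventually_qc_unit_compact (q : E →⋆ₐ[ℂ] D) {K : Set E} (hK : IsCompact K)
    (hqK : ∀ c ∈ K, q c = 0) {ε : ℝ} (hε : 0 < ε) :
    ∀ᶠ e in qcFilter q, ∀ c ∈ K, ‖c - e * c‖ < ε := by
  obtain ⟨t, htK, htf, ht⟩ := hK.finite_cover_balls (half_pos hε)
  have h : ∀ᶠ e in qcFilter q, ∀ c ∈ t, ‖c - e * c‖ < ε / 2 :=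
    (htf.eventually_all).2 fun c hc => eventually_qc_unit q (hqK c (htK hc)) (half_pos hε)
  filter_upwards [h, eventually_qc_contraction q] with e he ⟨_, h0, h1⟩ c hc
  obtain ⟨d, hd, hcd⟩ := Set.mem_iUnion₂.1 (ht hc)
  rw [Metric.mem_ball, dist_eq_norm] at hcd
  calc ‖c - e * c‖ = ‖(1 - e) * (c - d) + (d - e * d)‖ := by congr 1; noncomm_ring
    _ ≤ ‖(1 - e) * (c - d)‖ + ‖d - e * d‖ := norm_add_le _ _
    _ ≤ ‖1 - e‖ * ‖c - d‖ + ‖d - e * d‖ := by gcongr; exact norm_mul_le _ _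
    _ ≤ 1 * ‖c - d‖ + ‖d - e * d‖ := by gcongr; exact norm_one_sub_le h0 h1
    _ < ε / 2 + ε / 2 := by rw [one_mul]; exact add_lt_add hcd (he d hd)
    _ = ε := by ring

/-! ### Damped exponentials -/

omit [PartialOrder E] [StarOrderedRing E] in
lemma norm_pow_comm_le (X b : E) (n : ℕ) :
    ‖X ^ (n + 1) * b - b * X ^ (n + 1)‖ ≤ (n + 1) * ‖X‖ ^ n * ‖X * b - b * X‖ := by
  induction n with
  | zero => simp
  | succ n ih =>
    have hpow : ‖X ^ (n + 1)‖ ≤ ‖X‖ ^ (n + 1) := norm_pow_le' X n.succ_pos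
    calc ‖X ^ (n + 1 + 1) * b - b * X ^ (n + 1 + 1)‖
        = ‖X ^ (n + 1) * (X * b - b * X) + (X ^ (n + 1) * b - b * X ^ (n + 1)) * X‖ := by
          rw [pow_succ X (n + 1)]; congr 1; noncomm_ring
      _ ≤ ‖X ^ (n + 1)‖ * ‖X * b - b * X‖ + ‖X ^ (n + 1) * b - b * X ^ (n + 1)‖ * ‖X‖ :=
          (norm_add_le _ _).trans (add_le_add (norm_mul_le _ _) (norm_mul_le _ _))
      _ ≤ ‖X‖ ^ (n + 1) * ‖X * b - b * X‖ + ((n + 1) * ‖X‖ ^ n * ‖X * b - b * X‖) * ‖X‖ := by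
          gcongr
      _ = _ := by push_cast; ring

omit [PartialOrder E] [StarOrderedRing E] in
lemma norm_exp_comm_le (X b : E) :
    ‖NormedSpace.exp X * b - b * NormedSpace.exp X‖ ≤ Real.exp ‖X‖ * ‖X * b - b * X‖ := by
  have h1 := NormedSpace.exp_series_hasSum_exp' (𝕂 := ℂ) X
  have h2 := (h1.mul_right b).sub (h1.mul_left b)
  have h3 : HasSum (fun n : ℕ => ((n.factorial : ℝ)⁻¹ * ‖X‖ ^ n) * ‖X * b - b * X‖)
      (Real.exp ‖X‖ * ‖X * b - b * X‖) := by
    have := NormedSpace.exp_series_hasSum_exp' (𝕂 := ℝ) ‖X‖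
    rw [← Real.exp_eq_exp_ℝ] at this
    exact this.mul_right _
  have h4 := (hasSum_nat_add_iff' 1).2 h2
  simp only [Finset.range_one, Finset.sum_singleton, pow_zero, Nat.factorial_zero, Nat.cast_one,
    inv_one, one_smul, one_mul, mul_one, sub_self, sub_zero] at h4
  rw [← h4.tsum_eq, ← h3.tsum_eq]
  refine tsum_of_norm_bounded h3.summable.hasSum fun n => ?_
  rw [smul_mul_assoc, mul_smul_comm, ← smul_sub, norm_smul, norm_inv, Complex.norm_natCast]
  calc ((n + 1).factorial : ℝ)⁻¹ * ‖X ^ (n + 1) * b - b * X ^ (n + 1)‖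
      ≤ ((n + 1).factorial : ℝ)⁻¹ * ((n + 1) * ‖X‖ ^ n * ‖X * b - b * X‖) := by
        gcongr; exact norm_pow_comm_le X b n
    _ = _ := by
        rw [Nat.factorial_succ]
        push_cast
        have : (n.factorial : ℝ) ≠ 0 := by positivity
        field_simp

/-- A family `G e` of paths of unitaries of `E`, jointly continuous in the parameter `e` and the time
`t`, such that for `e` in the kernel of `q` the path `G e` lifts `g`, and such that `G e` commutes
asymptotically with each element of `X`, uniformly on bounded time intervals, as `e` runs along the
quasicentral approximate unit `qcFilter q`. -/
structure DampedPath (q : E →⋆ₐ[ℂ] D) (X : Set E) (G : E → ℝ → unitary E) (g : ℝ → D) : Prop where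
  cont : Continuous (Function.uncurry G)
  map : ∀ e, q e = 0 → ∀ t, q (G e t) = g t
  small : ∀ b ∈ X, ∀ T : ℝ, ∀ ε > 0, ∀ᶠ e in qcFilter q, ∀ t ∈ Set.Icc 0 T,
    ‖(G e t : E) * b - b * G e t‖ < ε

omit [StarOrderedRing E] in
lemma DampedPath.one (q : E →⋆ₐ[ℂ] D) (X : Set E) :
    DampedPath q X (fun _ _ => 1) (fun _ => 1) where
  cont := continuous_const
  map := by simp
  small := by
    intro b _ T ε hε
    exact Filter.Eventually.of_forall fun _ _ _ => by simpa using hε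

omit [StarOrderedRing E] in
lemma DampedPath.mul {q : E →⋆ₐ[ℂ] D} {X : Set E} {G G' : E → ℝ → unitary E} {g g' : ℝ → D}
    (h : DampedPath q X G g) (h' : DampedPath q X G' g') :
    DampedPath q X (fun e t => G e t * G' e t) (fun t => g t * g' t) where
  cont := h.cont.mul h'.cont
  map := by intro e he t; simp [h.map e he t, h'.map e he t]
  small := by
    intro b hb T ε hε
    filter_upwards [h.small b hb T (ε / 2) (half_pos hε), h'.small b hb T (ε / 2) (half_pos hε)]
      with e h1 h2 t ht
    have h1 := h1 t ht
    have h2 := h2 t ht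
    calc ‖((G e t * G' e t : unitary E) : E) * b - b * (G e t * G' e t : unitary E)‖
        = ‖(G e t : E) * ((G' e t : E) * b - b * G' e t)
            + ((G e t : E) * b - b * G e t) * G' e t‖ := by
          congr 1; push_cast; noncomm_ring
      _ ≤ ‖(G e t : E) * ((G' e t : E) * b - b * G' e t)‖
            + ‖((G e t : E) * b - b * G e t) * G' e t‖ := norm_add_le _ _
      _ = ‖(G' e t : E) * b - b * G' e t‖ + ‖(G e t : E) * b - b * G e t‖ := by
          rw [CStarRing.norm_coe_unitary_mul, CStarRing.norm_mul_coe_unitary]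
      _ < ε := by linarith

/-- The compression `(1 - e) H (1 - e)*` of a self-adjoint `H`. -/
noncomputable def damp (H : selfAdjoint E) (e : E) : selfAdjoint E :=
  ⟨(1 - e) * H * star (1 - e), H.2.conjugate (1 - e)⟩

omit [PartialOrder E] [StarOrderedRing E] in
lemma map_exp_smul (q : E →⋆ₐ[ℂ] D) (x : selfAdjoint E) :
    q (selfAdjoint.expUnitary x) = NormedSpace.exp (Complex.I • q x) := by
  let +nondep : NormedAlgebra ℚ E := .restrictScalars ℚ ℂ E
  let +nondep : NormedAlgebra ℚ D := .restrictScalars ℚ ℂ D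
  rw [selfAdjoint.expUnitary_coe, NormedSpace.map_exp q (starAlgHom_continuous q), map_smul]

/-- If `q H` commutes with `q X`, the exponentials of the compressions `(1 - e) H (1 - e)` form a
damped path lifting `q (exp (i H))`. With `r = [e, b]` and `k = [H, b]`, which lies in the kernel of
`q`, one has
`[(1 - e) H (1 - e), b] = -(1 - e) H r + (k - e k) (1 - e) - r H (1 - e)`,
and every term is small. -/
lemma DampedPath.exp (q : E →⋆ₐ[ℂ] D) (X : Set E) (H : ℝ → selfAdjoint E) (hH : Continuous H)
    (hHX : ∀ b ∈ X, ∀ t, q (H t * b - b * H t) = 0) :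
    DampedPath q X (fun e t => selfAdjoint.expUnitary (damp (H t) e))
      (fun t => q (selfAdjoint.expUnitary (H t))) where
  cont := by
    refine selfAdjoint.continuous_expUnitary.comp ?_
    refine Continuous.subtype_mk ?_ _
    fun_prop
  map := by
    intro e he t
    rw [map_exp_smul, map_exp_smul]
    simp [damp, he, map_star]
  small := by
    intro b hb T ε hε
    have hcH : Continuous fun t => (H t : E) := continuous_subtype_val.comp hH
    obtain ⟨C, hC⟩ := isCompact_Icc (a := (0 : ℝ)) (b := T) |>.exists_bound_of_continuousOn
      hcH.continuousOn
    set C' := max C 0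
    have hC'0 : 0 ≤ C' := le_max_right _ _
    set η := ε / (Real.exp C' * (2 * C' + 2)) with hη
    have hη0 : 0 < η := by positivity
    have hK : IsCompact ((fun t => (H t : E) * b - b * H t) '' Set.Icc 0 T) :=
      isCompact_Icc.image (by fun_prop)
    have hqK : ∀ c ∈ (fun t => (H t : E) * b - b * H t) '' Set.Icc 0 T, q c = 0 := by
      rintro _ ⟨t, _, rfl⟩
      exact hHX b hb t
    filter_upwards [eventually_qc_contraction q, eventually_qc_comm q b hη0,
      eventually_qc_unit_compact q hK hqK hη0] with e ⟨hqe, h0, h1⟩ hcomm hunit t ht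
    have hse : star e = e := (IsSelfAdjoint.of_nonneg h0).star_eq
    have hn := norm_one_sub_le h0 h1
    have hHt : ‖(H t : E)‖ ≤ C' := (hC t ht).trans (le_max_left _ _)
    have hu := hunit _ ⟨t, ht, rfl⟩
    obtain ⟨h, hh⟩ : ∃ h : E, h = H t := ⟨_, rfl⟩
    simp only [← hh] at hHt hu
    have hd : (damp (H t) e : E) = (1 - e) * h * (1 - e) := by
      simp [damp, hse, hh]
    have hdn : ‖(damp (H t) e : E)‖ ≤ C' := by
      rw [hd]
      calc ‖(1 - e) * h * (1 - e)‖ ≤ ‖1 - e‖ * ‖h‖ * ‖1 - e‖ := norm_mul₃_le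
        _ ≤ 1 * C' * 1 := by gcongr
        _ = C' := by ring
    set r := e * b - b * e
    set k := h * b - b * h
    have hdc : ‖(damp (H t) e : E) * b - b * damp (H t) e‖ ≤ 2 * C' * η + η := by
      have e1 : (damp (H t) e : E) * b - b * damp (H t) e =
          -((1 - e) * h * r) + (k - e * k) * (1 - e) - r * (h * (1 - e)) := by
        rw [hd]; simp only [r, k]; noncomm_ring
      rw [e1]
      have n1 : ‖(1 - e) * h * r‖ ≤ 1 * C' * η :=
        norm_mul₃_le.trans (by gcongr)
      have n2 : ‖(k - e * k) * (1 - e)‖ ≤ η * 1 :=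
        (norm_mul_le _ _).trans (by gcongr)
      have n3 : ‖r * (h * (1 - e))‖ ≤ η * (C' * 1) :=
        (norm_mul_le _ _).trans (by gcongr; exact (norm_mul_le _ _).trans (by gcongr))
      have n4 := norm_sub_le (-((1 - e) * h * r) + (k - e * k) * (1 - e)) (r * (h * (1 - e)))
      have n5 := norm_add_le (-((1 - e) * h * r)) ((k - e * k) * (1 - e))
      rw [norm_neg] at n5
      linarith
    rw [selfAdjoint.expUnitary_coe]
    generalize (damp (H t) e : E) = d at hdn hdc ⊢
    have hI : ‖(Complex.I • d)‖ = ‖d‖ := by rw [norm_smul]; simp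
    calc _ ≤ Real.exp ‖Complex.I • d‖ * ‖(Complex.I • d) * b - b * (Complex.I • d)‖ :=
          norm_exp_comm_le _ _
      _ = Real.exp ‖d‖ * ‖d * b - b * d‖ := by
          rw [hI, smul_mul_assoc, mul_smul_comm, ← smul_sub, norm_smul]; simp
      _ ≤ Real.exp C' * (2 * C' * η + η) := by gcongr
      _ < Real.exp C' * ((2 * C' + 2) * η) := by
          have := Real.exp_pos C'
          gcongr
          linarith
      _ = ε := by rw [hη]; field_simp

/-! ### Lifting paths of the relative commutant -/

omit [PartialOrder E] [StarOrderedRing E] in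
lemma exists_selfAdjoint_lift {q : E →⋆ₐ[ℂ] D} (hq : Function.Surjective q) (x : D)
    (hx : star x = x) : ∃ h : selfAdjoint E, q h = x := by
  obtain ⟨y, hy⟩ := hq x
  refine ⟨⟨(2 : ℝ)⁻¹ • (y + star y), ?_⟩, ?_⟩
  · exact IsSelfAdjoint.smul (IsSelfAdjoint.all (2 : ℝ)⁻¹) (IsSelfAdjoint.add_star_self y)
  · show q ((2 : ℝ)⁻¹ • (y + star y)) = x
    rw [← Complex.coe_smul, map_smul, map_add, map_star, hy, hx, ← two_smul ℂ, smul_smul]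
    simp

/-- The relative commutant `D ∩ q(φ(A))′`. Mathlib's centralizer commutes also with the adjoints of
the given set, which here is closed under adjoints. -/
noncomputable abbrev relComm {A : Type*} [CStarAlgebra A] (q : E →⋆ₐ[ℂ] D) (φ : A →⋆ₐ[ℂ] E) :
    StarSubalgebra ℂ D :=
  StarSubalgebra.centralizer ℂ (Set.range fun a => q (φ a))

omit [PartialOrder E] [StarOrderedRing E] in
lemma mem_relComm {A : Type*} [CStarAlgebra A] {q : E →⋆ₐ[ℂ] D} {φ : A →⋆ₐ[ℂ] E} {d : D} :
    d ∈ relComm q φ ↔ ∀ a, d * q (φ a) = q (φ a) * d := by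
  rw [StarSubalgebra.mem_centralizer_iff, Set.forall_mem_range]
  constructor
  · exact fun h a => (h a).1.symm
  · refine fun h a => ⟨(h a).symm, ?_⟩
    rw [← map_star, ← map_star]
    exact (h (star a)).symm

/-- A unitary of `D ∩ q(φ(A))′` connected to `1` there has a (constant) damped lift: it is a finite
product of exponentials of self-adjoint elements of the relative commutant. -/
lemma exists_initial {A : Type*} [CStarAlgebra A] (q : E →⋆ₐ[ℂ] D) (hq : Function.Surjective q)
    (φ : A →⋆ₐ[ℂ] E) {d : D}
    (hpath : JoinedIn {d : D | d ∈ unitary D ∧ ∀ a : A, d * q (φ a) = q (φ a) * d} 1 d) :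
    ∃ G, DampedPath q (Set.range φ) G (fun _ => d) := by
  have hF : IsClosed (relComm q φ : Set D) := Set.isClosed_centralizer _
  let : CStarAlgebra (relComm q φ) := StarSubalgebra.cstarAlgebra (relComm q φ)
  have hlist : ∀ l : List (selfAdjoint (relComm q φ)), ∃ G,
      DampedPath q (Set.range φ) G
        (fun _ => (((l.map selfAdjoint.expUnitary).prod : unitary (relComm q φ)) : D)) := by
    intro l
    induction l with
    | nil => exact ⟨_, by simpa using DampedPath.one q (Set.range φ)⟩
    | cons x l ih =>
      obtain ⟨G, hG⟩ := ih
      have hxs : star ((x : relComm q φ) : D) = x := congrArg Subtype.val x.2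
      obtain ⟨h, hh⟩ := exists_selfAdjoint_lift hq _ hxs
      have h1 := DampedPath.exp q (Set.range φ) (fun _ => h) continuous_const (by
        rintro _ ⟨a, rfl⟩ t
        rw [map_sub, map_mul, map_mul, hh, sub_eq_zero]
        exact mem_relComm.1 (x : relComm q φ).2 a)
      refine ⟨fun e t => selfAdjoint.expUnitary (damp h e) * G e t, ?_⟩
      convert h1.mul hG using 2
      rw [List.map_cons, List.prod_cons, map_exp_smul, hh]
      have := map_exp_smul (relComm q φ).subtype x
      simp only [StarSubalgebra.subtype_apply] at this
      rw [← this]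
      rfl
  obtain ⟨γ, hγ⟩ := hpath
  let U : ∀ t, unitary (relComm q φ) := fun t => ⟨⟨γ t, mem_relComm.2 (hγ t).2⟩, by
    rw [Unitary.mem_iff]
    exact ⟨Subtype.ext (Unitary.star_mul_self_of_mem (hγ t).1),
      Subtype.ext (Unitary.mul_star_self_of_mem (hγ t).1)⟩⟩
  have hU0 : U 0 = 1 := Subtype.ext (Subtype.ext γ.source)
  have hU : Joined (1 : unitary (relComm q φ)) (U 1) :=
    ⟨{ toFun := U
       continuous_toFun := (γ.continuous.subtype_mk _).subtype_mk _
       source' := hU0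
       target' := rfl }⟩
  obtain ⟨l, hl⟩ := Unitary.mem_pathComponentOne_iff.1 hU
  obtain ⟨G, hG⟩ := hlist l
  refine ⟨G, ?_⟩
  rw [hl] at hG
  have : ((U 1 : relComm q φ) : D) = d := γ.target
  rwa [this] at hG

omit [PartialOrder E] [StarOrderedRing E] in
/-- A path of unitaries moves by less than `2` on each interval of a suitable subdivision
of `[0, ∞)`, so that the argument of `V s * star (V (τ k))` is continuous there. -/
lemma exists_subdivision (V : ℝ → unitary E) (hV : Continuous V) :
    ∃ τ : ℕ → ℝ, τ 0 = 0 ∧ Monotone τ ∧ Tendsto τ atTop atTop ∧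
      ∀ k, ∀ s ∈ Set.Icc (τ k) (τ (k + 1)), ‖(V s : E) - V (τ k)‖ < 2 := by
  let S : ℝ → Set ℝ := fun x => {c | 0 < c ∧ ∀ s ∈ Set.Icc x (x + c), ‖(V s : E) - V x‖ < 2}
  have hconv : ∀ x, Convex ℝ (S x) := by
    intro x
    refine Set.OrdConnected.convex ⟨fun a ha b hb c hc => ⟨ha.1.trans_le hc.1, fun s hs => ?_⟩⟩
    exact hb.2 s ⟨hs.1, hs.2.trans (by linarith [hc.2])⟩
  obtain ⟨δ, hδ⟩ := exists_continuous_forall_mem_convex_of_local_const hconv (by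
    intro x
    obtain ⟨ρ, hρ, h⟩ := Metric.continuous_iff.1 (continuous_subtype_val.comp hV) x 1 one_pos
    refine ⟨ρ / 2, ?_⟩
    filter_upwards [Metric.ball_mem_nhds x (half_pos hρ)] with y hy
    rw [Metric.mem_ball, Real.dist_eq, abs_lt] at hy
    refine ⟨half_pos hρ, fun s hs => ?_⟩
    have h1 := h s (by rw [Real.dist_eq, abs_lt]; constructor <;> linarith [hs.1, hs.2])
    have h2 := h y (by rw [Real.dist_eq, abs_lt]; constructor <;> linarith)
    rw [dist_eq_norm] at h1 h2
    calc ‖(V s : E) - V y‖ = ‖((V s : E) - V x) - ((V y : E) - V x)‖ := by congr 1; abel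
      _ ≤ _ := norm_sub_le _ _
      _ < 1 + 1 := add_lt_add h1 h2
      _ = 2 := by norm_num)
  -- a continuous step length keeps `τ` from converging: a limit `l` would satisfy `δ l = 0`
  let τ : ℕ → ℝ := fun k => Nat.rec 0 (fun _ x => x + δ x) k
  have hτ : ∀ k, τ (k + 1) = τ k + δ (τ k) := fun k => rfl
  have hmono : Monotone τ := monotone_nat_of_le_succ fun k => by
    rw [hτ]; linarith [(hδ (τ k)).1]
  refine ⟨τ, rfl, hmono, ?_, fun k s hs => (hδ (τ k)).2 s (by rwa [← hτ])⟩
  rcases tendsto_atTop_of_monotone hmono with h | ⟨l, hl⟩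
  · exact h
  · exfalso
    have h1 : Tendsto (fun k => τ k + δ (τ k)) atTop (𝓝 (l + δ l)) :=
      hl.add ((δ.continuous.tendsto l).comp hl)
    have h2 : Tendsto (fun k => τ k + δ (τ k)) atTop (𝓝 l) := (tendsto_add_atTop_iff_nat 1).2 hl
    have := tendsto_nhds_unique h1 h2
    linarith [(hδ l).1]

omit [PartialOrder E] [StarOrderedRing E] in
lemma argSelfAdjoint_one : Unitary.argSelfAdjoint (1 : unitary E) = 0 := by
  have := argSelfAdjoint_expUnitary (A := E) (x := 0) (by simpa using Real.pi_pos)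
  simpa using this

omit [PartialOrder E] [StarOrderedRing E] in
lemma commute_map_argSelfAdjoint (q : E →⋆ₐ[ℂ] D) (u : unitary E) (d : D)
    (h : Commute (q u) d) (hs : Commute (star (q u)) d) :
    Commute (q (Unitary.argSelfAdjoint u)) d := by
  rw [Unitary.argSelfAdjoint_coe]
  by_cases hc : ContinuousOn (fun z : ℂ => (Complex.arg z : ℂ)) (spectrum ℂ (u : E))
  · have hn : IsStarNormal (u : E) := inferInstance
    have hqn : IsStarNormal (q (u : E)) := hn.map q
    rw [StarAlgHom.map_cfc (S := ℂ) q _ (u : E) hc (starAlgHom_continuous q) hn hqn]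
    exact h.cfc hs _
  -- the functional calculus of a discontinuous function is `0` by convention
  · rw [cfc_apply_of_not_continuousOn _ hc, map_zero]
    exact Commute.zero_left d

/-- Damped lifts `W k` of `t ↦ q (V (min t (τ k)))`, with `W (k + 1)` extending `W k` beyond
time `τ k` by one more exponential factor. -/
lemma exists_damped_steps {A : Type*} [CStarAlgebra A] (q : E →⋆ₐ[ℂ] D)
    (hq : Function.Surjective q) (φ : A →⋆ₐ[ℂ] E) (V : ℝ → unitary E) (hV : Continuous V)
    (hV0 : ∀ t ≤ 0, V t = V 0)
    (hVφ : ∀ t a, q (V t) * q (φ a) = q (φ a) * q (V t))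
    (hpath : JoinedIn {d : D | d ∈ unitary D ∧ ∀ a : A, d * q (φ a) = q (φ a) * d} 1 (q (V 0))) :
    ∃ (τ : ℕ → ℝ) (W : ℕ → E → ℝ → unitary E), Monotone τ ∧ Tendsto τ atTop atTop ∧
      (∀ k, DampedPath q (Set.range φ) (W k) (fun t => q (V (min t (τ k))))) ∧
      ∀ k e t, t ≤ τ k → W (k + 1) e t = W k e t := by
  obtain ⟨G, hG⟩ := exists_initial q hq φ hpath
  obtain ⟨τ, hτ0, hτm, hτt, hτV⟩ := exists_subdivision V hV
  have hle : ∀ k, τ k ≤ τ (k + 1) := fun k => hτm k.le_succ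
  -- `c k` clamps the time to `[τ k, τ (k + 1)]`, so that each step is defined for all times
  let c : ℕ → ℝ → ℝ := fun k t => max (τ k) (min t (τ (k + 1)))
  have hcm : ∀ k t, c k t ∈ Set.Icc (τ k) (τ (k + 1)) := fun k t =>
    ⟨le_max_left _ _, max_le (hle k) (min_le_right _ _)⟩
  let H : ℕ → ℝ → selfAdjoint E := fun k t =>
    Unitary.argSelfAdjoint (V (c k t) * star (V (τ k)))
  have hHexp : ∀ k t, selfAdjoint.expUnitary (H k t) = V (c k t) * star (V (τ k)) := fun k t =>
    Unitary.expUnitary_eq_mul_inv _ _ (hτV k _ (hcm k t))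
  have hHc : ∀ k, Continuous (H k) := by
    intro k
    refine Unitary.continuousOn_argSelfAdjoint.comp_continuous ?_ fun t => ?_
    · have : Continuous (c k) := by fun_prop
      exact (hV.comp this).mul continuous_const
    · rw [Metric.mem_ball, Subtype.dist_eq, dist_eq_norm]
      rw [show ((V (c k t) * star (V (τ k)) : unitary E) : E) - (1 : unitary E) =
        ((V (c k t) : E) - V (τ k)) * (star (V (τ k)) : unitary E) by
          rw [sub_mul]; simp]
      rw [CStarRing.norm_mul_coe_unitary]
      exact hτV k _ (hcm k t)
  have hVmem : ∀ t, q (V t) ∈ relComm q φ := fun t => mem_relComm.2 (hVφ t)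
  have hHφ : ∀ k, ∀ b ∈ Set.range φ, ∀ t, q (H k t * b - b * H k t) = 0 := by
    rintro k _ ⟨a, rfl⟩ t
    have hm : q ((V (c k t) * star (V (τ k)) : unitary E) : E) ∈ relComm q φ := by
      have := mul_mem (hVmem (c k t)) (star_mem (hVmem (τ k)))
      simpa [map_star] using this
    have := commute_map_argSelfAdjoint q (V (c k t) * star (V (τ k))) (q (φ a))
      (mem_relComm.1 hm a) (mem_relComm.1 (star_mem hm) a)
    rw [map_sub, map_mul, map_mul, sub_eq_zero]
    exact this
  let W : ℕ → E → ℝ → unitary E := fun k =>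
    Nat.rec G (fun k w e t => selfAdjoint.expUnitary (damp (H k t) e) * w e t) k
  have hW : ∀ k e t, W (k + 1) e t = selfAdjoint.expUnitary (damp (H k t) e) * W k e t :=
    fun k e t => rfl
  refine ⟨τ, W, hτm, hτt, fun k => ?_, fun k e t ht => ?_⟩
  · induction k with
    | zero =>
      change DampedPath q _ G _
      convert hG using 2 with t
      rw [hτ0, hV0 _ (min_le_right _ _)]
    | succ k ih =>
      convert (DampedPath.exp q (Set.range φ) (H k) (hHc k) (hHφ k)).mul ih using 2 with t
      rw [hHexp, ← map_mul]
      rcases le_total t (τ k) with h | h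
      · have h1 : c k t = τ k := by
          simp only [c]; rw [min_eq_left (h.trans (hle k)), max_eq_left h]
        rw [h1, min_eq_left (h.trans (hle k)), min_eq_left h]
        simp
      · have h1 : c k t = min t (τ (k + 1)) := max_eq_right (le_min h (hle k))
        rw [h1, min_eq_right h]
        simp [mul_assoc]
  · have h1 : c k t = τ k := by
      simp only [c]; rw [min_eq_left (ht.trans (hle k)), max_eq_left ht]
    have h2 : H k t = 0 := by
      simp only [H]; rw [h1, Unitary.mul_star_self, argSelfAdjoint_one]
    have h3 : damp (H k t) e = 0 := by
      rw [h2]; ext; simp [damp]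
    rw [hW, h3, selfAdjoint.expUnitary_zero, one_mul]

/-- A coherent sequence of damped lifts, in the sense that `W k` and `W (k + 1)` agree up to
time `τ k`, gives one continuous path of unitaries `w t = W k (e t) t` that commutes asymptotically
with a given sequence: the parameter `e t` is chosen continuously in `t` inside convex sets that
shrink as `t → ∞`. -/
lemma exists_diagonal (q : E →⋆ₐ[ℂ] D) {X : Set E} {τ : ℕ → ℝ} {W : ℕ → E → ℝ → unitary E}
    {g : ℕ → ℝ → D} (hτm : Monotone τ) (hτt : Tendsto τ atTop atTop)
    (hW : ∀ k, DampedPath q X (W k) (g k))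
    (hst : ∀ k e t, t ≤ τ k → W (k + 1) e t = W k e t)
    (b : ℕ → E) (hb : ∀ j, b j ∈ X) :
    ∃ w : ℝ → unitary E, Continuous w ∧ (∀ k t, t ≤ τ k → q (w t) = g k t) ∧
      ∀ j, Tendsto (fun t => ‖(w t : E) * b j - b j * w t‖) atTop (𝓝 0) := by
  have hst' : ∀ k m, k ≤ m → ∀ e t, t ≤ τ k → W m e t = W k e t := by
    intro k m hkm e t ht
    induction m, hkm using Nat.le_induction with
    | base => rfl
    | succ m hm ih => rw [hst m e t (ht.trans (hτm hm)), ih]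
  have hM : ∀ t : ℝ, ∃ k, t ≤ τ k := fun t => (hτt.eventually_ge_atTop t).exists
  choose M hM using hM
  have hst2 : ∀ k e t, t ≤ τ k → W (M t) e t = W k e t := by
    intro k e t ht
    rcases le_total k (M t) with h | h
    · exact hst' _ _ h e t ht
    · exact (hst' _ _ h e t (hM t)).symm
  have hP : ∀ n : ℕ, ∃ p : Finset E × ℝ, 0 < p.2 ∧ ∀ e ∈ qcNhd q p.1 p.2,
      ∀ j ∈ Finset.range (n + 1), ∀ t ∈ Set.Icc (0 : ℝ) n,
        ‖(W (M n) e t : E) * b j - b j * W (M n) e t‖ < 1 / ((n : ℝ) + 1) := by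
    intro n
    refine (qcFilter_basis q).eventually_iff.1 ?_
    rw [Filter.eventually_all_finset]
    intro j _
    exact (hW (M n)).small (b j) (hb j) n _ Nat.one_div_pos_of_nat
  choose p hp0 hp using hP
  -- the sets for all `n ≤ ⌈t⌉` are intersected, so that a point of the set at time `x + 1` serves
  -- a whole neighbourhood of `x`
  let S : ℝ → Set E := fun t => ⋂ n ∈ Finset.range (⌈t⌉₊ + 1), qcNhd q (p n).1 (p n).2
  obtain ⟨c, hc⟩ := exists_continuous_forall_mem_convex_of_local_const (t := S)
    (fun t => convex_iInter fun n => convex_iInter fun _ => convex_qcNhd q _ _) (by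
      intro x
      have hne : ∀ᶠ e in qcFilter q, ∀ n ∈ Finset.range (⌈x⌉₊ + 1 + 1),
          e ∈ qcNhd q (p n).1 (p n).2 := by
        rw [Filter.eventually_all_finset]
        exact fun n _ => (qcFilter_basis q).mem_of_mem (hp0 n)
      obtain ⟨e, he⟩ := hne.exists
      refine ⟨e, ?_⟩
      filter_upwards [gt_mem_nhds (show x < x + 1 by linarith)] with y hy
      refine Set.mem_iInter₂.2 fun n hn => he n ?_
      have : ⌈y⌉₊ ≤ ⌈x⌉₊ + 1 := by
        rw [Nat.ceil_le]; push_cast; linarith [Nat.le_ceil x]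
      rw [Finset.mem_range] at hn ⊢
      omega)
  have hc' : ∀ t, c t ∈ qcNhd q (p ⌈t⌉₊).1 (p ⌈t⌉₊).2 := fun t =>
    Set.mem_iInter₂.1 (hc t) _ (by simp)
  refine ⟨fun t => W (M t) (c t) t, ?_, ?_, ?_⟩
  · rw [continuous_iff_continuousAt]
    intro t
    have h1 : Continuous fun s => W (M (t + 1)) (c s) s :=
      (hW (M (t + 1))).cont.comp (c.continuous.prodMk continuous_id)
    refine h1.continuousAt.congr ?_
    filter_upwards [gt_mem_nhds (show t < t + 1 by linarith)] with s hs
    exact (hst2 _ _ _ (hs.le.trans (hM (t + 1)))).symm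
  · intro k t ht
    show q (W (M t) (c t) t) = _
    rw [hst2 k _ _ ht]
    exact (hW k).map _ (hc' t).1 t
  · intro j
    have hlim : Tendsto (fun t : ℝ => 1 / ((⌈t⌉₊ : ℝ) + 1)) atTop (𝓝 0) :=
      tendsto_one_div_add_atTop_nhds_zero_nat.comp tendsto_nat_ceil_atTop
    refine squeeze_zero' (Eventually.of_forall fun t => norm_nonneg _) ?_ hlim
    filter_upwards [eventually_ge_atTop 0, eventually_ge_atTop (j : ℝ)] with t ht0 htj
    have h1 : t ≤ (⌈t⌉₊ : ℝ) := Nat.le_ceil t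
    rw [hst2 (M ⌈t⌉₊) _ _ (h1.trans (hM _))]
    refine (hp ⌈t⌉₊ (c t) (hc' t) j ?_ t ⟨ht0, h1⟩).le
    rw [Finset.mem_range]
    have : (j : ℝ) ≤ ⌈t⌉₊ := htj.trans h1
    have : j ≤ ⌈t⌉₊ := by exact_mod_cast this
    omega

end Quasi

/-- asymptotic unitary equivalence implemented by unitaries in the
unitization of the ideal.  Let `A` be a separable unital C*-algebra, `q : E → D` a surjective
unital *-homomorphism with kernel `I = {x | q x = 0}`, and `φ, ψ : A → E` unital
*-homomorphisms with `q ∘ φ = q ∘ ψ` injective.  If a norm-continuous path of unitaries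
`(v t)_{t ≥ 0}` of `E` conjugates `φ` to `ψ` modulo `I` asymptotically, and `q (v 0)` lies in
the path component of the identity in the unitary group of the relative commutant
`D ∩ q(φ(A))′`, then there is such a path of unitaries consisting of elements of the form
`λ·1 + x` with `λ ∈ ℂ` and `x ∈ I`. -/
theorem stmt5 {A E D : Type*} [CStarAlgebra A] [CStarAlgebra E] [CStarAlgebra D]
    [TopologicalSpace.SeparableSpace A]
    (q : E →⋆ₐ[ℂ] D) (hq : Function.Surjective q)
    (φ ψ : A →⋆ₐ[ℂ] E)
    (hqφψ : q.comp φ = q.comp ψ)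
    (hinj : Function.Injective (q.comp φ))
    (v : ℝ → E)
    (hv_cont : ContinuousOn v (Set.Ici (0:ℝ)))
    (hv_unit : ∀ t ∈ Set.Ici (0:ℝ), v t ∈ unitary E)
    (hv_ideal : ∀ (a : A), ∀ t ∈ Set.Ici (0:ℝ), q (v t * φ a * star (v t) - ψ a) = 0)
    (hv_tendsto : ∀ a : A,
      Filter.Tendsto (fun t => ‖v t * φ a * star (v t) - ψ a‖) Filter.atTop (nhds 0))
    (hpath : JoinedIn {d : D | d ∈ unitary D ∧ ∀ a : A, d * q (φ a) = q (φ a) * d}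
      1 (q (v 0))) :
    ∃ u : ℝ → E, ContinuousOn u (Set.Ici (0:ℝ)) ∧
      (∀ t ∈ Set.Ici (0:ℝ), u t ∈ unitary E ∧
        ∃ (c : ℂ) (x : E), q x = 0 ∧ u t = algebraMap ℂ E c + x) ∧
      (∀ (a : A), ∀ t ∈ Set.Ici (0:ℝ), q (u t * φ a * star (u t) - ψ a) = 0) ∧
      (∀ a : A,
        Filter.Tendsto (fun t => ‖u t * φ a * star (u t) - ψ a‖) Filter.atTop (nhds 0)) := by
  let := CStarAlgebra.spectralOrder E
  have := CStarAlgebra.spectralOrderedRing E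
  have hqψ : ∀ a, q (φ a) = q (ψ a) := fun a => DFunLike.congr_fun hqφψ a
  -- `v` is extended to all of `ℝ` by its value at `0`
  let V : ℝ → unitary E := fun t => ⟨v (max t 0), hv_unit _ (le_max_right t 0)⟩
  have hVv : ∀ t, 0 ≤ t → (V t : E) = v t := fun t ht => by simp only [V, max_eq_left ht]
  have hV : Continuous V := Continuous.subtype_mk
    (hv_cont.comp_continuous (by fun_prop) fun t => le_max_right t 0) _
  have hV0 : ∀ t ≤ 0, V t = V 0 := fun t ht => by
    simp only [V, max_eq_right ht, max_self]
  have hVφ : ∀ t a, q (V t) * q (φ a) = q (φ a) * q (V t) := by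
    intro t a
    have h1 : q (V t) * q (φ a) * star (q (V t)) = q (φ a) := by
      have := hv_ideal a (max t 0) (le_max_right t 0)
      rw [map_sub, sub_eq_zero, ← hqψ, map_mul, map_mul, map_star] at this
      exact this
    have h2 : star (q (V t)) * q (V t) = 1 := by
      rw [← map_star, ← map_mul, Unitary.coe_star_mul_self, map_one]
    calc q (V t) * q (φ a) = q (V t) * q (φ a) * (star (q (V t)) * q (V t)) := by
          rw [h2, mul_one]
      _ = q (V t) * q (φ a) * star (q (V t)) * q (V t) := by simp only [mul_assoc]
      _ = q (φ a) * q (V t) := by rw [h1]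
  obtain ⟨τ, W, hτm, hτt, hW, hst⟩ := exists_damped_steps q hq φ V hV hV0 hVφ
    (by rwa [hVv 0 le_rfl])
  obtain ⟨w, hwc, hqw, hw⟩ := exists_diagonal q hτm hτt hW hst
    (fun j => φ (TopologicalSpace.denseSeq A j)) (fun j => ⟨_, rfl⟩)
  have hqw' : ∀ t, q (w t) = q (V t) := by
    intro t
    obtain ⟨k, hk⟩ := (hτt.eventually_ge_atTop t).exists
    rw [hqw k t hk, min_eq_left hk]
  have hφ : ∀ a, ‖φ a‖ ≤ ‖a‖ := fun a => NonUnitalStarAlgHom.norm_apply_le φ a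
  have hwφ : ∀ a, Tendsto (fun t => ‖(w t : E) * φ a - φ a * w t‖) atTop (𝓝 0) := by
    intro a
    rw [Metric.tendsto_nhds]
    intro ε hε
    obtain ⟨j, hj⟩ := (TopologicalSpace.denseRange_denseSeq A).exists_dist_lt a
      (show 0 < ε / 4 by positivity)
    filter_upwards [Metric.tendsto_nhds.1 (hw j) (ε / 2) (half_pos hε)] with t ht
    rw [Real.dist_eq, sub_zero, abs_norm] at ht ⊢
    set b := TopologicalSpace.denseSeq A j
    rw [dist_eq_norm] at hj
    have hd : ‖φ (a - b)‖ < ε / 4 := (hφ _).trans_lt hj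
    calc ‖(w t : E) * φ a - φ a * w t‖
        = ‖((w t : E) * φ (a - b) - φ (a - b) * w t) + ((w t : E) * φ b - φ b * w t)‖ := by
          rw [map_sub]; congr 1; noncomm_ring
      _ ≤ (‖(w t : E) * φ (a - b)‖ + ‖φ (a - b) * w t‖) + ‖(w t : E) * φ b - φ b * w t‖ :=
          (norm_add_le _ _).trans (by gcongr; exact norm_sub_le _ _)
      _ = (‖φ (a - b)‖ + ‖φ (a - b)‖) + ‖(w t : E) * φ b - φ b * w t‖ := by
          rw [CStarRing.norm_coe_unitary_mul, CStarRing.norm_mul_coe_unitary]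
      _ < ε := by linarith
  have hqu : ∀ t, q (V t * star (w t) : unitary E) = 1 := by
    intro t
    rw [Submonoid.coe_mul, map_mul, Unitary.coe_star, map_star, hqw', ← map_star, ← map_mul,
      Unitary.mul_star_self_of_mem (V t).2, map_one]
  refine ⟨fun t => (V t * star (w t) : unitary E), ?_, fun t _ => ⟨Subtype.prop _, 1,
    (V t * star (w t) : unitary E) - 1, ?_, ?_⟩, fun a t _ => ?_, fun a => ?_⟩
  · exact (continuous_subtype_val.comp (hV.mul hwc.star)).continuousOn
  · rw [map_sub, hqu, map_one, sub_self]
  · rw [map_one]; abel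
  · rw [map_sub, map_mul, map_mul, map_star, hqu, hqψ]; simp
  · have hlim := (hwφ a).add (hv_tendsto a)
    rw [add_zero] at hlim
    refine squeeze_zero' (Eventually.of_forall fun t => norm_nonneg _) ?_ hlim
    filter_upwards [eventually_ge_atTop 0] with t ht
    have hww : (star (w t : E)) * w t = 1 := Unitary.coe_star_mul_self _
    have h1 : ((V t * star (w t) : unitary E) : E) * φ a * star ((V t * star (w t) : unitary E) : E)
        - ψ a = -((V t * star (w t) : unitary E) * ((w t : E) * φ a - φ a * w t)
          * (star (V t) : unitary E)) + (v t * φ a * star (v t) - ψ a) := by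
      rw [← hVv t ht]
      simp only [Submonoid.coe_mul, Unitary.coe_star, star_mul, star_star]
      calc _ = -((V t : E) * φ a * star (V t : E)) + (V t : E) * star (w t : E) * φ a * w t
            * star (V t : E) + (V t * φ a * star (V t : E) - ψ a) := by noncomm_ring
        _ = -((V t : E) * (star (w t : E) * w t) * φ a * star (V t : E))
            + (V t : E) * star (w t : E) * φ a * w t
            * star (V t : E) + (V t * φ a * star (V t : E) - ψ a) := by rw [hww, mul_one]
        _ = _ := by noncomm_ring
    rw [h1]
    refine (norm_add_le _ _).trans (add_le_add_left ?_ _)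
    rw [norm_neg, CStarRing.norm_mul_coe_unitary, CStarRing.norm_coe_unitary_mul]
end

section
/- Let D be a C*-algebra satisfying the Hjelmborg–Rørdam criterion: for every positive element a ∈ D and every ε > 0 there exists x ∈ D with ‖a − x x*‖ < ε and ‖(x* x)(x x*)‖ < ε. Then every separable C*-subalgebra D₀ of D is contained in a separable C*-subalgebra E of D that also satisfies the Hjelmborg–Rørdam criterion (i.e., for every positive a ∈ E and ε > 0 there exists x ∈ E with ‖a − x x*‖ < ε and ‖(x* x)(x x*)‖ < ε). -/
/-!
The proof is a Löwenheim–Skolem argument. Choose a Skolem function `g` giving, for each `c` and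
each `n : ℕ`, a witness `g c n` of the criterion for the positive element `star c * c` and
`ε = 1 / (n + 1)`. Starting from a countable set whose closure contains `D₀`, close off under the
algebra operations, under multiplication by a countable dense set of complex scalars, and under
`g`. The result is a countable set `T` whose closure `E` is a separable C⋆-subalgebra.

The criterion holds in `E` because a positive `a ∈ E` has a square root `b` in `E`, so
`a = star b * b` is a limit of elements `star c * c` with `c ∈ T`, and the witnesses for those
elements lie in `T`.
-/

open Set Topology

/-- A countable set lies in a countable set closed under given countable families of
unary operations `u i` and binary operations `f i`. -/
theorem exists_countable_closed_under {D ι κ : Type*} [Countable ι] [Countable κ]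
    (u : ι → D → D) (f : κ → D → D → D) (C : Set D) (hC : C.Countable) :
    ∃ T : Set D, T.Countable ∧ C ⊆ T ∧ (∀ i, ∀ x ∈ T, u i x ∈ T) ∧
      ∀ i, ∀ x ∈ T, ∀ y ∈ T, f i x y ∈ T := by
  let F : Set D → Set D := fun S =>
    S ∪ ((⋃ i, u i '' S) ∪ ⋃ i, image2 (f i) S S)
  let S : ℕ → Set D := fun n => F^[n] C
  have hS (n) : S (n + 1) = F (S n) := Function.iterate_succ_apply' F n C
  have hcount (n) : (S n).Countable := by
    induction n with
    | zero => exact hC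
    | succ n ih =>
      rw [hS]
      exact ih.union ((countable_iUnion fun i => ih.image _).union
        (countable_iUnion fun i => ih.image2 ih _))
  have hmono : Monotone S := monotone_nat_of_le_succ fun n => by
    rw [hS]
    exact subset_union_left
  refine ⟨⋃ n, S n, countable_iUnion hcount, subset_iUnion S 0, ?_, ?_⟩
  · intro i x hx
    obtain ⟨n, hn⟩ := mem_iUnion.1 hx
    refine mem_iUnion.2 ⟨n + 1, ?_⟩
    rw [hS]
    exact Or.inr (Or.inl (mem_iUnion.2 ⟨i, mem_image_of_mem _ hn⟩))
  · intro i x hx y hy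
    obtain ⟨n, hn⟩ := mem_iUnion.1 hx
    obtain ⟨m, hm⟩ := mem_iUnion.1 hy
    refine mem_iUnion.2 ⟨max n m + 1, ?_⟩
    rw [hS]
    exact Or.inr (Or.inr (mem_iUnion.2 ⟨i, mem_image2_of_mem
      (hmono (le_max_left n m) hn) (hmono (le_max_right n m) hm)⟩))

/-- Square roots stay in a closed star subalgebra: an element of `E` that is positive in the
ambient algebra has the form `star b * b` with `b ∈ E`. -/
theorem exists_mem_eq_star_mul_self {D : Type*} [NonUnitalCStarAlgebra D]
    (E : NonUnitalStarSubalgebra ℂ D) (hE : IsClosed (E : Set D)) (a : D) (ha : a ∈ E)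
    (hpos : ∃ b : D, a = star b * b) : ∃ b ∈ E, a = star b * b := by
  let _ := CStarAlgebra.spectralOrder D
  have := CStarAlgebra.spectralOrderedRing D
  have h0 : 0 ≤ a := by
    obtain ⟨b, rfl⟩ := hpos
    exact star_mul_self_nonneg b
  refine ⟨CFC.sqrt a, ?_, ?_⟩
  · rw [CFC.sqrt_eq_real_sqrt a h0]
    exact cfcₙ_mem (𝕜 := ℝ) (𝕜' := ℂ) (hs := hE) _ ha
  · rw [(CFC.sqrt_nonneg a).isSelfAdjoint.star_eq, CFC.sqrt_mul_sqrt_self a h0]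


/-- separabilization of the Hjelmborg–Rørdam criterion.  If a C*-algebra
`D` satisfies the Hjelmborg–Rørdam criterion — for every positive `a ∈ D` and `ε > 0` there
is `x ∈ D` with `‖a - x x*‖ < ε` and `‖(x* x)(x x*)‖ < ε` — then every separable
C*-subalgebra `D₀ ⊆ D` is contained in a separable C*-subalgebra `E ⊆ D` that also satisfies
the Hjelmborg–Rørdam criterion. -/
theorem stmt6 {D : Type*} [NonUnitalCStarAlgebra D]
    (hHR : ∀ a : D, (∃ b : D, a = star b * b) → ∀ ε : ℝ, 0 < ε →
      ∃ x : D, ‖a - x * star x‖ < ε ∧ ‖(star x * x) * (x * star x)‖ < ε)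
    (D₀ : NonUnitalStarSubalgebra ℂ D)
    (hD₀closed : IsClosed (D₀ : Set D))
    (hD₀sep : TopologicalSpace.IsSeparable (D₀ : Set D)) :
    ∃ E : NonUnitalStarSubalgebra ℂ D, IsClosed (E : Set D) ∧
      TopologicalSpace.IsSeparable (E : Set D) ∧ (D₀ : Set D) ⊆ (E : Set D) ∧
      ∀ a ∈ E, (∃ b : D, a = star b * b) → ∀ ε : ℝ, 0 < ε →
        ∃ x ∈ E, ‖a - x * star x‖ < ε ∧ ‖(star x * x) * (x * star x)‖ < ε := by
  choose g hg₁ hg₂ using fun (c : D) (n : ℕ) =>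
    hHR (star c * c) ⟨c, rfl⟩ (1 / ((n : ℝ) + 1)) Nat.one_div_pos_of_nat
  obtain ⟨C, hC, hD₀C⟩ := hD₀sep
  obtain ⟨Q, hQ, hQd⟩ := TopologicalSpace.exists_countable_dense ℂ
  have : Countable Q := hQ.to_subtype
  -- Unary operations: the star, the scalars in `Q` and the maps `g · n`.
  obtain ⟨T, hT, hCT, hu, hf⟩ := exists_countable_closed_under
    (ι := Unit ⊕ Q ⊕ ℕ) (κ := Bool)
    (Sum.elim (fun _ => star) (Sum.elim (fun q x => (q : ℂ) • x) fun n c => g c n))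
    (fun i x y => if i then x + y else x * y) (insert 0 C) (hC.insert 0)
  have hadd : ∀ x ∈ T, ∀ y ∈ T, x + y ∈ T := fun x hx y hy => by simpa using hf true x hx y hy
  have hmul : ∀ x ∈ T, ∀ y ∈ T, x * y ∈ T := fun x hx y hy => by simpa using hf false x hx y hy
  have hstar : ∀ x ∈ T, star x ∈ T := hu (Sum.inl ())
  have hsmul : ∀ q ∈ Q, ∀ x ∈ T, q • x ∈ T := fun q hq => hu (Sum.inr (Sum.inl ⟨q, hq⟩))
  have hgT : ∀ n, ∀ c ∈ T, g c n ∈ T := fun n => hu (Sum.inr (Sum.inr n))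
  let E : NonUnitalStarSubalgebra ℂ D :=
    { carrier := closure T
      zero_mem' := subset_closure (hCT (mem_insert 0 C))
      add_mem' := fun hx hy => map_mem_closure₂ continuous_add hx hy hadd
      mul_mem' := fun hx hy => map_mem_closure₂ continuous_mul hx hy hmul
      smul_mem' := fun z _ hx => map_mem_closure₂ continuous_smul (hQd z) hx hsmul
      star_mem' := fun hx => map_mem_closure continuous_star hx hstar }
  have hEclosed : IsClosed (E : Set D) := isClosed_closure
  refine ⟨E, hEclosed, ⟨T, hT, Subset.rfl⟩,
    hD₀C.trans (closure_mono ((subset_insert 0 C).trans hCT)), ?_⟩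
  intro a ha hpos ε hε
  obtain ⟨b, hb, rfl⟩ := exists_mem_eq_star_mul_self E hEclosed a ha hpos
  have hcl : star b * b ∈ closure ((fun c : D => star c * c) '' T) :=
    map_mem_closure (f := fun c : D => star c * c) (by fun_prop) hb (mapsTo_image _ T)
  obtain ⟨_, ⟨c, hc, rfl⟩, hdist⟩ := Metric.mem_closure_iff.1 hcl (ε / 2) (half_pos hε)
  obtain ⟨n, hn⟩ := exists_nat_one_div_lt (half_pos hε)
  refine ⟨g c n, subset_closure (hgT n c hc), ?_, ?_⟩
  · rw [← dist_eq_norm]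
    have h := hg₁ c n
    rw [← dist_eq_norm] at h
    linarith [dist_triangle (star b * b) (star c * c) (g c n * star (g c n))]
  · linarith [hg₂ c n]
end

section
/- Let A and D be unital C*-algebras and let θ : A → D be a unital *-homomorphism that is full, meaning that for every nonzero b ∈ A the closed two-sided ideal of D generated by θ(b) is all of D. Then the composition of θ with the upper-left corner embedding D → M₂(D) is unitizably full; concretely, for every a ∈ A and λ ∈ ℂ with (a, λ) ≠ (0, 0), the closed two-sided ideal of M₂(D) generated by the diagonal matrix diag(θ(a), λ·1_D) is all of M₂(D). -/
/-!
Some diagonal entry `c` of the given matrix already generates `D` as a closed two-sided ideal: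
the entry `θ a` if `a ≠ 0`, by fullness, and otherwise the invertible scalar `λ`. Compressing by
matrix units turns every `x * c * y` into a matrix `single i j (x * c * y)` of the ideal generated
by the diagonal matrix, so by continuity of `single i j` the closed ideal contains all
`single i j d`, and these span the matrix algebra.
-/

/-- If the entry `M k l` generates `D` as a closed two-sided ideal, then `M` generates the whole
matrix algebra over `D` as a closed two-sided ideal. -/
theorem closure_ideal_eq_univ_of_entry {D n : Type*} [CStarAlgebra D] [Fintype n] [DecidableEq n]
    (M : Matrix n n D) (k l : n)
    (hc : closure (↑(Submodule.span ℂ {z : D | ∃ x y : D, z = x * M k l * y}) : Set D) =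
      Set.univ) :
    closure (↑(Submodule.span ℂ {z : Matrix n n D | ∃ X Y : Matrix n n D, z = X * M * Y}) :
      Set (Matrix n n D)) = Set.univ := by
  set J := Submodule.span ℂ {z : Matrix n n D | ∃ X Y : Matrix n n D, z = X * M * Y} with hJ
  have hsingle : ∀ (i j : n) (d : D), Matrix.single i j d ∈ J.topologicalClosure := by
    intro i j d
    have hcont : Continuous (fun d : D => Matrix.single i j d) := by
      refine continuous_matrix fun i' j' => ?_
      by_cases hij : i = i' ∧ j = j'
      · simpa [Matrix.single_apply, hij] using continuous_id'
      · simpa [Matrix.single_apply, hij] using continuous_const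
    have hmaps : Set.MapsTo (fun d : D => Matrix.single i j d)
        (↑(Submodule.span ℂ {z : D | ∃ x y : D, z = x * M k l * y}) : Set D) J := by
      intro z hz
      have hle : Submodule.span ℂ {z : D | ∃ x y : D, z = x * M k l * y} ≤
          J.comap (Matrix.singleLinearMap ℂ i j) := by
        refine Submodule.span_le.2 ?_
        rintro _ ⟨x, y, rfl⟩
        refine Submodule.subset_span ⟨Matrix.single i k x, Matrix.single l j y, ?_⟩
        simp [Matrix.single_mul_mul_single]
      exact hle hz
    exact hmaps.closure hcont (hc ▸ Set.mem_univ d)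
  refine Set.eq_univ_of_forall fun Z => ?_
  change Z ∈ J.topologicalClosure
  rw [Matrix.matrix_eq_sum_single Z]
  exact Submodule.sum_mem _ fun i _ => Submodule.sum_mem _ fun j _ => hsingle i j _


/-- If `θ : A → D` is a full unital *-homomorphism between unital
C*-algebras (the closed two-sided ideal of `D` generated by `θ b` is all of `D` for every
nonzero `b`), then the composition of `θ` with the upper-left corner embedding `D → M₂(D)` is
unitizably full: for every `a ∈ A` and `λ ∈ ℂ` with `(a, λ) ≠ (0, 0)`, the closed two-sided
ideal of `M₂(D)` generated by `diag(θ a, λ·1)` is all of `M₂(D)`. -/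
theorem stmt7 {A D : Type*} [CStarAlgebra A] [CStarAlgebra D]
    (θ : A →⋆ₐ[ℂ] D)
    (hfull : ∀ b : A, b ≠ 0 →
      closure (↑(Submodule.span ℂ {z : D | ∃ x y : D, z = x * θ b * y}) : Set D) = Set.univ)
    (a : A) (lam : ℂ) (h : ¬(a = 0 ∧ lam = 0)) :
    closure (↑(Submodule.span ℂ {z : Matrix (Fin 2) (Fin 2) D |
        ∃ X Y : Matrix (Fin 2) (Fin 2) D,
          z = X * Matrix.diagonal ![θ a, algebraMap ℂ D lam] * Y}) :
      Set (Matrix (Fin 2) (Fin 2) D)) = Set.univ := by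
  by_cases ha : a = 0
  · have hlam : lam ≠ 0 := fun hl => h ⟨ha, hl⟩
    refine closure_ideal_eq_univ_of_entry _ 1 1 ?_
    refine Set.eq_univ_of_forall fun z => subset_closure (Submodule.subset_span ?_)
    refine ⟨z, algebraMap ℂ D lam⁻¹, ?_⟩
    simp [mul_assoc, ← map_mul, hlam]
  · exact closure_ideal_eq_univ_of_entry _ 0 0 (by simpa using hfull a ha)
end
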